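/- arXiv:1005.0078 — 4 statements merged into one kernel-verified Lean document; each statement's English description precedes it below -/
import Mathlib

section
/- A dominant polynomial map f: ℂⁿ → ℂⁿ is proper if and only if the induced ring homomorphism f*: ℂ[s₁,…,sₙ] → ℂ[x₁,…,xₙ], sending sᵢ to the i-th component polynomial fᵢ, makes ℂ[x₁,…,xₙ] an integral extension of the image of f*. -/
open MvPolynomial

/-!
An element `b` of a finitely generated `𝕜`-domain `B` is integral over `A` if and only if `b` is
bounded on every set of points of `B` on which all of `A` is bounded; applied to the coordinate
functions of affine space, this turns integrality into properness.

If `b` is integral, Cauchy's bound on the roots of a monic polynomial bounds `b`. If it is not, then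
`u = b⁻¹` is not a unit of `A[u]`, so some point of `A[u]` kills `u`. Let `P ⊆ A[u]` be a Noether
normalization, `m` the minimal polynomial of `u` over `P`, and `s` the image of that point in the
affine space of `P`. The constant coefficient of `m` vanishes at `s`, so `m` has arbitrarily small
roots over points near `s`; over a generic nearby point every root is the value of `u` at a point
of `B[u]`. Along such points `A` stays bounded, being integral over `P`, while `b = u⁻¹` does not.
-/

theorem exists_basicOpen_subset_of_isConstructible {R : Type*} [CommRing R] [IsDomain R]
    {Z : Set (PrimeSpectrum R)} (hZ : Topology.IsConstructible Z) (hbot : ⊥ ∈ Z) :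
    ∃ r : R, r ≠ 0 ∧ (PrimeSpectrum.basicOpen r : Set (PrimeSpectrum R)) ⊆ Z := by
  obtain ⟨T, rfl⟩ := PrimeSpectrum.exists_constructibleSetData_iff.2 hZ
  simp only [PrimeSpectrum.ConstructibleSetData.toSet, Set.mem_iUnion] at hbot
  obtain ⟨C, hC, hzero, hne⟩ := hbot
  have hg : ∀ i, C.g i = 0 := fun i ↦ hzero ⟨i, rfl⟩
  refine ⟨C.f, by simpa using hne, fun 𝔭 h𝔭 ↦ ?_⟩
  refine Set.mem_biUnion hC ⟨?_, by simpa using h𝔭⟩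
  rintro _ ⟨i, rfl⟩
  rw [hg]
  exact 𝔭.asIdeal.zero_mem

section Points

variable {k : Type*} [Field k] [IsAlgClosed k]

theorem exists_algHom_apply_eq_zero_of_ne_top {R : Type*} [CommRing R] [Algebra k R]
    [Algebra.FiniteType k R] {I : Ideal R} (hI : I ≠ ⊤) :
    ∃ χ : R →ₐ[k] k, ∀ r ∈ I, χ r = 0 := by
  obtain ⟨M, hM, hIM⟩ := I.exists_le_maximal hI
  let := Ideal.Quotient.field M
  have := finite_of_finite_type_of_isJacobsonRing k (R ⧸ M)
  let l : (R ⧸ M) →ₐ[k] k := IsAlgClosed.lift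
  refine ⟨l.comp (Ideal.Quotient.mkₐ k M), fun r hr ↦ ?_⟩
  rw [AlgHom.comp_apply, Ideal.Quotient.mkₐ_eq_mk, Ideal.Quotient.eq_zero_iff_mem.2 (hIM hr),
    map_zero]

theorem exists_algHom_comp_algebraMap_eq {R S : Type*} [CommRing R] [CommRing S] [Algebra k R]
    [Algebra k S] [Algebra R S] [IsScalarTower k R S] [Algebra.FiniteType k S] (ψ : R →ₐ[k] k)
    {Q : Ideal S} [Q.IsPrime] (hQ : Q.comap (algebraMap R S) = RingHom.ker ψ) :
    ∃ χ : S →ₐ[k] k, ∀ r, χ (algebraMap R S r) = ψ r := by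
  obtain ⟨χ, hχ⟩ := exists_algHom_apply_eq_zero_of_ne_top (k := k) (I := Q) Ideal.IsPrime.ne_top'
  refine ⟨χ, fun r ↦ ?_⟩
  have hmem : r - algebraMap k R (ψ r) ∈ RingHom.ker ψ := by simp [RingHom.mem_ker]
  rw [← hQ, Ideal.mem_comap] at hmem
  have hzero := hχ _ hmem
  rwa [map_sub, map_sub, ← IsScalarTower.algebraMap_apply, AlgHom.commutes, sub_eq_zero] at hzero

theorem exists_ne_zero_forall_exists_algHom_extension {R S : Type*} [CommRing R]
    [IsNoetherianRing R] [CommRing S] [IsDomain S] [Algebra k R] [Algebra k S] [Algebra R S]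
    [IsScalarTower k R S] [FaithfulSMul R S] [Algebra.FiniteType k S] :
    ∃ r : R, r ≠ 0 ∧ ∀ ψ : R →ₐ[k] k, ψ r ≠ 0 →
      ∃ χ : S →ₐ[k] k, ∀ a, χ (algebraMap R S a) = ψ a := by
  have hinj : Function.Injective (algebraMap R S) := FaithfulSMul.algebraMap_injective R S
  have : IsDomain R := hinj.isDomain
  have : Algebra.FiniteType R S := .of_restrictScalars_finiteType k R S
  have hfp : (algebraMap R S).FinitePresentation :=
    (RingHom.finitePresentation_algebraMap).2 (Algebra.FinitePresentation.of_finiteType.1 ‹_›)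
  obtain ⟨r, hr, hsub⟩ :=
    exists_basicOpen_subset_of_isConstructible (PrimeSpectrum.isConstructible_range_comap hfp)
      ⟨⊥, PrimeSpectrum.ext (Ideal.comap_bot_of_injective _ hinj)⟩
  refine ⟨r, hr, fun ψ hψ ↦ ?_⟩
  let 𝔭 : PrimeSpectrum R := ⟨RingHom.ker ψ, RingHom.ker_isPrime ψ⟩
  obtain ⟨Q, hQ⟩ := hsub (show 𝔭 ∈ PrimeSpectrum.basicOpen r from hψ)
  exact exists_algHom_comp_algebraMap_eq ψ (congrArg PrimeSpectrum.asIdeal hQ)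

theorem exists_ne_zero_forall_root_exists_algHom {R S : Type*} [CommRing R]
    [IsNoetherianRing R] [IsIntegrallyClosed R] [CommRing S] [IsDomain S] [Algebra k R]
    [Algebra k S] [Algebra R S] [IsScalarTower k R S] [FaithfulSMul R S] [Algebra.FiniteType k S]
    {u : S} (hu : IsIntegral R u) :
    ∃ r : R, r ≠ 0 ∧ ∀ ψ : R →ₐ[k] k, ψ r ≠ 0 → ∀ z ∈ ((minpoly R u).map (ψ : R →+* k)).roots,
      ∃ χ : S →ₐ[k] k, (∀ a, χ (algebraMap R S a) = ψ a) ∧ χ u = z := by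
  have : IsDomain R := (FaithfulSMul.algebraMap_injective R S).isDomain
  let E := Algebra.adjoin R {u}
  have : Module.Finite R E := Module.Finite.iff_fg.2 hu.fg_adjoin_singleton
  have : IsNoetherianRing E := .of_finite R E
  obtain ⟨e, he, hext⟩ := exists_ne_zero_forall_exists_algHom_extension (k := k) (R := E) (S := S)
  obtain ⟨r, hr, g, hg⟩ :=
    (Algebra.IsIntegral.isIntegral (R := R) e).isAlgebraic.exists_nonzero_dvd
      (mem_nonZeroDivisors_of_ne_zero he)
  refine ⟨r, hr, fun ψ hψ z hz ↦ ?_⟩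
  -- `R` is integrally closed, so `R[u] ≃ R[T] / (minpoly R u)`; `ψ` and `z` give a point of `R[u]`.
  let := ψ.toRingHom.toAlgebra
  have : IsScalarTower k R k := .of_algHom ψ
  let pb : PowerBasis R E := Algebra.adjoin.powerBasis' hu
  have hgen : algebraMap E S pb.gen = u := by
    simp only [pb, Algebra.adjoin.powerBasis'_gen]
    rfl
  have hmin : minpoly R pb.gen = minpoly R u := by
    rw [← hgen, minpoly.algebraMap_eq (FaithfulSMul.algebraMap_injective E S)]
  have hroot : Polynomial.aeval z (minpoly R pb.gen) = 0 := by
    rw [hmin, Polynomial.aeval_def, ← Polynomial.eval_map]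
    exact Polynomial.isRoot_of_mem_roots hz
  let ψ' : E →ₐ[k] k := (pb.lift z hroot).restrictScalars k
  have hψ' : ∀ a, ψ' (algebraMap R E a) = ψ a := (pb.lift z hroot).commutes
  have hψe : ψ' e ≠ 0 := fun h ↦ hψ <| by rw [← hψ', hg, map_mul, h, zero_mul]
  obtain ⟨χ, hχ⟩ := hext ψ' hψe
  refine ⟨χ, fun a ↦ ?_, ?_⟩
  · rw [IsScalarTower.algebraMap_apply R E S, hχ, hψ']
  · rw [← hgen, hχ]
    exact pb.lift_gen z hroot

end Points

section NearbyPoints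

variable {𝕜 σ : Type*} [NontriviallyNormedField 𝕜]

theorem dense_setOf_eval_ne_zero [Finite σ] {p : MvPolynomial σ 𝕜} (hp : p ≠ 0) :
    Dense {s : σ → 𝕜 | eval s p ≠ 0} := by
  have := Fintype.ofFinite σ
  refine Metric.dense_iff.2 fun s ε hε ↦ ?_
  by_contra hempty
  refine hp (funext_set (fun i ↦ Metric.ball (s i) ε)
    (fun i ↦ infinite_of_mem_nhds (s i) (Metric.ball_mem_nhds _ hε)) fun x hx ↦ ?_)
  by_contra hxp
  exact hempty ⟨x, by rwa [ball_pi s hε], by simpa using hxp⟩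

theorem exists_mem_roots_norm_lt {p : Polynomial 𝕜} (hp : p.Monic) (hsplits : p.Splits) {ε : ℝ}
    (hε : 0 ≤ ε) (h : ‖p.coeff 0‖ < ε ^ p.natDegree) : ∃ z ∈ p.roots, ‖z‖ < ε := by
  lift ε to NNReal using hε
  by_contra! hroots
  refine h.not_ge ?_
  have hle : ε ^ (p.roots.map (‖·‖₊)).card ≤ (p.roots.map (‖·‖₊)).prod :=
    Multiset.pow_card_le_prod (Multiset.forall_mem_map_iff.2 hroots)
  rw [Multiset.card_map, ← hsplits.natDegree_eq_card_roots] at hle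
  rw [hsplits.coeff_zero_eq_prod_roots_of_monic hp, norm_mul, norm_pow, norm_neg, norm_one,
    one_pow, one_mul]
  have : ‖p.roots.prod‖₊ = (p.roots.map (‖·‖₊)).prod := map_multiset_prod nnnormHom _
  rw [← coe_nnnorm, this]
  exact_mod_cast hle

theorem exists_algHom_norm_lt [IsAlgClosed 𝕜] [Finite σ] {S : Type*} [CommRing S] [IsDomain S]
    [Algebra 𝕜 S] [Algebra.FiniteType 𝕜 S] [Algebra (MvPolynomial σ 𝕜) S]
    [IsScalarTower 𝕜 (MvPolynomial σ 𝕜) S] [FaithfulSMul (MvPolynomial σ 𝕜) S] {u : S}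
    (hu : IsIntegral (MvPolynomial σ 𝕜) u) {s : σ → 𝕜}
    (hs : eval s ((minpoly (MvPolynomial σ 𝕜) u).coeff 0) = 0) {ε : ℝ} (hε : 0 < ε)
    {U : Set (σ → 𝕜)} (hU : U ∈ nhds s) :
    ∃ χ : S →ₐ[𝕜] 𝕜, ‖χ u‖ < ε ∧ (fun i ↦ χ (algebraMap (MvPolynomial σ 𝕜) S (X i))) ∈ U := by
  set m := minpoly (MvPolynomial σ 𝕜) u
  have hm : m.Monic := minpoly.monic hu
  obtain ⟨p, hp, hlift⟩ :=
    exists_ne_zero_forall_root_exists_algHom (k := 𝕜) (R := MvPolynomial σ 𝕜) hu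
  have hcoeff : ∀ᶠ t in nhds s, ‖eval t (m.coeff 0)‖ < ε ^ m.natDegree :=
    (continuous_eval (m.coeff 0)).norm.continuousAt.eventually_lt continuousAt_const
      (by simpa [hs] using pow_pos hε _)
  obtain ⟨t, htp, ⟨ht, htU⟩⟩ := (dense_setOf_eval_ne_zero hp).inter_nhds_nonempty
    (hcoeff.and hU)
  obtain ⟨z, hz, hzε⟩ := exists_mem_roots_norm_lt (hm.map (eval t)) (IsAlgClosed.splits _) hε.le
    (by rwa [Polynomial.coeff_map, hm.natDegree_map])
  obtain ⟨χ, hχ, hχu⟩ := hlift (aeval t) htp z hz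
  refine ⟨χ, by rwa [hχu], ?_⟩
  simp only [hχ, aeval_X]
  exact htU

end NearbyPoints

theorem algHom_mem_of_forall_X_mem {τ R B : Type*} [CommSemiring R] [CommSemiring B] [Algebra R B]
    {φ : MvPolynomial τ R →ₐ[R] B} {W : Subalgebra R B} (hX : ∀ i, φ (X i) ∈ W)
    (p : MvPolynomial τ R) : φ p ∈ W := by
  have hle : Algebra.adjoin R (Set.range X) ≤ W.comap φ :=
    Algebra.adjoin_le (Set.range_subset_iff.2 hX)
  rw [adjoin_range_X] at hle
  exact hle Algebra.mem_top

section Bounded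

variable {𝕜 B : Type*} [NormedField 𝕜] [CommRing B] [Algebra 𝕜 B]

/-- The elements of `B` that are bounded, as functions, on a set `Ω` of `𝕜`-points of `B`. Points
are encoded as `𝕜`-algebra homomorphisms, and the value of `b` at the point `χ` is `χ b`. -/
def boundedSubalgebra (Ω : Set (B →ₐ[𝕜] 𝕜)) : Subalgebra 𝕜 B where
  carrier := {b | ∃ C : ℝ, ∀ χ ∈ Ω, ‖χ b‖ ≤ C}
  mul_mem' := by
    rintro a b ⟨C, hC⟩ ⟨D, hD⟩
    refine ⟨C * D, fun χ hχ ↦ ?_⟩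
    rw [map_mul]
    exact norm_mul_le_of_le (hC χ hχ) (hD χ hχ)
  add_mem' := by
    rintro a b ⟨C, hC⟩ ⟨D, hD⟩
    refine ⟨C + D, fun χ hχ ↦ ?_⟩
    rw [map_add]
    exact norm_add_le_of_le (hC χ hχ) (hD χ hχ)
  algebraMap_mem' c := ⟨‖c‖, fun χ _ ↦ by rw [AlgHom.commutes]; rfl⟩

theorem mem_boundedSubalgebra {Ω : Set (B →ₐ[𝕜] 𝕜)} {b : B} :
    b ∈ boundedSubalgebra Ω ↔ ∃ C : ℝ, ∀ χ ∈ Ω, ‖χ b‖ ≤ C :=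
  Iff.rfl

theorem mem_boundedSubalgebra_of_isIntegral {R : Type*} [CommRing R] [Algebra R B]
    {Ω : Set (B →ₐ[𝕜] 𝕜)} (hR : ∀ r, algebraMap R B r ∈ boundedSubalgebra Ω) {b : B}
    (hb : IsIntegral R b) : b ∈ boundedSubalgebra Ω := by
  obtain ⟨p, hp, hroot⟩ := hb
  have hcoeff : ∀ j, ∃ C : NNReal, ∀ χ ∈ Ω, ‖χ (algebraMap R B (p.coeff j))‖₊ ≤ C := fun j ↦ by
    obtain ⟨C, hC⟩ := hR (p.coeff j)
    exact ⟨C.toNNReal, fun χ hχ ↦ NNReal.le_toNNReal_of_coe_le (hC χ hχ)⟩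
  choose C hC using hcoeff
  refine ⟨((Finset.range p.natDegree).sup C + 1 : NNReal), fun χ hχ ↦ ?_⟩
  let e : R →+* 𝕜 := (χ : B →+* 𝕜).comp (algebraMap R B)
  have hχroot : (p.map e).IsRoot (χ b) := by
    have := congrArg (χ : B →+* 𝕜) hroot
    rwa [Polynomial.hom_eval₂, map_zero, ← Polynomial.eval_map] at this
  have hlt := hχroot.norm_lt_cauchyBound (hp.map _).ne_zero
  rw [Polynomial.cauchyBound, (hp.map _).leadingCoeff, hp.natDegree_map, nnnorm_one, div_one] at hlt
  refine NNReal.coe_le_coe.2 (hlt.le.trans ?_)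
  gcongr with j
  rw [Polynomial.coeff_map]
  exact hC j χ hχ

end Bounded

theorem map_algebraMap_coeff_zero_minpoly {R A K : Type*} [CommRing R] [Ring A] [Ring K]
    [Algebra R A] (χ : A →+* K) {u : A} (hu : χ u = 0) :
    χ (algebraMap R A ((minpoly R u).coeff 0)) = 0 := by
  have hroot := congrArg χ (minpoly.aeval R u)
  rwa [Polynomial.aeval_def, Polynomial.hom_eval₂, hu, Polynomial.eval₂_at_zero, map_zero] at hroot

theorem span_invOf_adjoin_ne_top {A S : Type*} [CommRing A] [CommRing S] [Algebra A S] {x : S}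
    [Invertible x] (hx : ¬ IsIntegral A x) :
    Ideal.span {(⟨⅟x, Algebra.subset_adjoin rfl⟩ : Algebra.adjoin A {⅟x})} ≠ ⊤ := by
  intro htop
  have : Nontrivial A := by
    by_contra h
    rw [not_nontrivial_iff_subsingleton] at h
    have := Module.subsingleton A S
    exact hx (Subsingleton.elim 0 x ▸ isIntegral_zero)
  obtain ⟨p, hp, hpx⟩ := Algebra.exists_aeval_invOf_eq_zero_of_idealMap_adjoin_sup_span_eq_top
    (⅟x) (⊥ : Ideal A) bot_ne_top (by rw [htop, sup_top_eq])
  rw [invOf_invOf] at hpx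
  exact hx ⟨p, sub_eq_zero.1 hp, hpx⟩

section Criterion

variable {𝕜 : Type*} [NontriviallyNormedField 𝕜] [IsAlgClosed 𝕜]

theorem exists_forall_mem_boundedSubalgebra_and_norm_lt {A S : Type*} [CommRing A] [CommRing S]
    [IsDomain S] [Algebra 𝕜 A] [Algebra 𝕜 S] [Algebra A S] [IsScalarTower 𝕜 A S] [FaithfulSMul A S]
    [Algebra.FiniteType 𝕜 A] [Algebra.FiniteType 𝕜 S] (χ₀ : A →ₐ[𝕜] 𝕜) {u : A} (hu : χ₀ u = 0) :
    ∃ Ω : Set (S →ₐ[𝕜] 𝕜), (∀ a, algebraMap A S a ∈ boundedSubalgebra Ω) ∧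
      ∀ ε > 0, ∃ χ ∈ Ω, ‖χ (algebraMap A S u)‖ < ε := by
  have hAS : Function.Injective (algebraMap A S) := FaithfulSMul.algebraMap_injective A S
  have : IsDomain A := hAS.isDomain
  obtain ⟨n, g, hg, hgint⟩ := exists_integral_inj_algHom_of_fg 𝕜 A
  let P := MvPolynomial (Fin n) 𝕜
  let : Algebra P A := g.toRingHom.toAlgebra
  let : Algebra P S := ((algebraMap A S).comp (algebraMap P A)).toAlgebra
  have : IsScalarTower P A S := .of_algebraMap_eq fun _ ↦ rfl
  have : IsScalarTower 𝕜 P A := .of_algHom g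
  have : IsScalarTower 𝕜 P S := .of_algebraMap_eq fun c ↦ by
    rw [IsScalarTower.algebraMap_apply 𝕜 A S, IsScalarTower.algebraMap_apply 𝕜 P A]
    rfl
  have : FaithfulSMul P S := (faithfulSMul_iff_algebraMap_injective P S).2 (hAS.comp hg)
  have : Algebra.IsIntegral P A := ⟨hgint⟩
  let s : Fin n → 𝕜 := fun i ↦ χ₀ (g (X i))
  have hs : χ₀.comp g = aeval s := by ext i; simp [s]
  have hcoeff : eval s ((minpoly P (algebraMap A S u)).coeff 0) = 0 := by
    rw [minpoly.algebraMap_eq hAS, ← coe_aeval_eq_eval, RingHom.coe_coe, ← hs]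
    exact map_algebraMap_coeff_zero_minpoly (χ₀ : A →+* 𝕜) hu
  refine ⟨{χ | (fun i ↦ χ (algebraMap P S (X i))) ∈ Metric.ball s 1}, fun a ↦ ?_, fun ε hε ↦ ?_⟩
  · refine mem_boundedSubalgebra_of_isIntegral (R := P) ?_
      (Algebra.IsIntegral.isIntegral a).algebraMap
    refine algHom_mem_of_forall_X_mem (φ := IsScalarTower.toAlgHom 𝕜 P S) fun i ↦ ?_
    refine ⟨‖s i‖ + 1, fun χ hχ ↦ ?_⟩
    exact norm_le_norm_add_const_of_dist_le
      ((dist_le_pi_dist _ _ i).trans (Metric.mem_ball.1 hχ).le)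
  · have hu : IsIntegral P (algebraMap A S u) := (Algebra.IsIntegral.isIntegral u).algebraMap
    obtain ⟨χ, hχu, hχ⟩ := exists_algHom_norm_lt hu hcoeff hε (Metric.ball_mem_nhds s one_pos)
    exact ⟨χ, hχ, hχu⟩

theorem exists_notMem_boundedSubalgebra_of_not_isIntegral {A S : Type*} [CommRing A] [CommRing S]
    [IsDomain S] [Algebra 𝕜 A] [Algebra 𝕜 S] [Algebra A S] [IsScalarTower 𝕜 A S]
    [Algebra.FiniteType 𝕜 A] [Algebra.FiniteType 𝕜 S] {x : S} (hunit : IsUnit x)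
    (hx : ¬ IsIntegral A x) :
    ∃ Ω : Set (S →ₐ[𝕜] 𝕜), (∀ a, algebraMap A S a ∈ boundedSubalgebra Ω) ∧
      x ∉ boundedSubalgebra Ω := by
  let := hunit.invertible
  let D := Algebra.adjoin A {⅟x}
  have : Algebra.FiniteType A D := .adjoin_of_finite (Set.finite_singleton _)
  have : Algebra.FiniteType 𝕜 D := .trans (S := A) ‹_› ‹_›
  have hne_top := span_invOf_adjoin_ne_top hx
  obtain ⟨χ₀, hχ₀⟩ := exists_algHom_apply_eq_zero_of_ne_top (k := 𝕜) hne_top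
  obtain ⟨Ω, hΩD, hΩ⟩ := exists_forall_mem_boundedSubalgebra_and_norm_lt (S := S) χ₀
    (hχ₀ _ (Ideal.mem_span_singleton_self _))
  refine ⟨Ω, fun a ↦ hΩD (algebraMap A D a), fun ⟨C, hC⟩ ↦ ?_⟩
  obtain ⟨χ, hχ, hχu⟩ := hΩ (|C| + 1)⁻¹ (by positivity)
  have hinv : ‖χ (⅟x)‖ * ‖χ x‖ = 1 := by
    rw [← norm_mul, ← map_mul, invOf_mul_self, map_one, norm_one]
  have : ‖χ (⅟x)‖ * ‖χ x‖ < 1 := calc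
    ‖χ (⅟x)‖ * ‖χ x‖ ≤ ‖χ (⅟x)‖ * (|C| + 1) := by
      gcongr
      linarith [hC χ hχ, le_abs_self C]
    _ < (|C| + 1)⁻¹ * (|C| + 1) := by gcongr; exact hχu
    _ = 1 := inv_mul_cancel₀ (by positivity)
  exact this.ne hinv

theorem isIntegral_iff_forall_mem_boundedSubalgebra {A B : Type*} [CommRing A] [CommRing B]
    [IsDomain B] [Algebra 𝕜 A] [Algebra 𝕜 B] [Algebra A B] [IsScalarTower 𝕜 A B]
    [Algebra.FiniteType 𝕜 A] [Algebra.FiniteType 𝕜 B] {b : B} :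
    IsIntegral A b ↔ ∀ Ω : Set (B →ₐ[𝕜] 𝕜),
      (∀ a, algebraMap A B a ∈ boundedSubalgebra Ω) → b ∈ boundedSubalgebra Ω := by
  refine ⟨fun hb Ω hΩ ↦ mem_boundedSubalgebra_of_isIntegral hΩ hb, fun h ↦ ?_⟩
  by_contra hb
  have hle : Submonoid.powers b ≤ nonZeroDivisors B :=
    powers_le_nonZeroDivisors_of_noZeroDivisors fun hb0 ↦ hb (hb0 ▸ isIntegral_zero)
  let S := Localization.Away b
  have : IsDomain S := IsLocalization.isDomain_localization hle
  have : Algebra.FiniteType 𝕜 S :=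
    .trans (S := B) ‹_› (IsLocalization.finiteType_of_monoid_fg (Submonoid.powers b) S)
  have hbS : ¬ IsIntegral A (algebraMap B S b) := by
    rwa [isIntegral_algebraMap_iff (IsLocalization.injective S hle)]
  obtain ⟨Ω, hΩA, hΩb⟩ := exists_notMem_boundedSubalgebra_of_not_isIntegral (𝕜 := 𝕜)
    (IsLocalization.Away.algebraMap_isUnit b) hbS
  obtain ⟨C, hC⟩ := h ((·.comp (IsScalarTower.toAlgHom 𝕜 B S)) '' Ω) fun a ↦ by
    obtain ⟨C, hC⟩ := hΩA a
    refine ⟨C, Set.forall_mem_image.2 fun χ hχ ↦ ?_⟩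
    rw [AlgHom.comp_apply, IsScalarTower.coe_toAlgHom', ← IsScalarTower.algebraMap_apply A B S]
    exact hC χ hχ
  exact hΩb ⟨C, fun χ hχ ↦ hC _ (Set.mem_image_of_mem _ hχ)⟩

end Criterion

section PolynomialMaps

variable {𝕜 σ τ : Type*}

theorem forall_mem_boundedSubalgebra_image_aeval_iff [NormedField 𝕜]
    {G : τ → MvPolynomial σ 𝕜} {Z : Set (σ → 𝕜)} :
    (∀ i, G i ∈ boundedSubalgebra (aeval '' Z : Set (MvPolynomial σ 𝕜 →ₐ[𝕜] 𝕜))) ↔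
      Bornology.IsBounded ((fun x i ↦ eval x (G i)) '' Z) := by
  rw [← Bornology.forall_isBounded_image_eval_iff]
  simp only [Function.eval, Set.image_image, isBounded_iff_forall_norm_le, Set.forall_mem_image,
    mem_boundedSubalgebra, aeval_eq_eval]

theorem forall_X_mem_boundedSubalgebra_image_aeval_iff [NormedField 𝕜] {Z : Set (σ → 𝕜)} :
    (∀ i, X i ∈ boundedSubalgebra (aeval '' Z : Set (MvPolynomial σ 𝕜 →ₐ[𝕜] 𝕜))) ↔
      Bornology.IsBounded Z := by
  rw [forall_mem_boundedSubalgebra_image_aeval_iff]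
  simp only [eval_X, Set.image_id']

theorem isIntegral_aeval_iff_forall_isBounded [NontriviallyNormedField 𝕜] [IsAlgClosed 𝕜]
    [Finite σ] [Finite τ] {F : τ → MvPolynomial σ 𝕜} :
    (aeval F : MvPolynomial τ 𝕜 →ₐ[𝕜] MvPolynomial σ 𝕜).toRingHom.IsIntegral ↔
      ∀ Z : Set (σ → 𝕜), Bornology.IsBounded ((fun x i ↦ eval x (F i)) '' Z) →
        Bornology.IsBounded Z := by
  let := (aeval F : MvPolynomial τ 𝕜 →ₐ[𝕜] MvPolynomial σ 𝕜).toRingHom.toAlgebra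
  have : IsScalarTower 𝕜 (MvPolynomial τ 𝕜) (MvPolynomial σ 𝕜) := .of_algHom (aeval F)
  have hcriterion (b : MvPolynomial σ 𝕜) := isIntegral_iff_forall_mem_boundedSubalgebra (𝕜 := 𝕜)
    (A := MvPolynomial τ 𝕜) (b := b)
  constructor
  · intro hint Z hZ
    rw [← forall_X_mem_boundedSubalgebra_image_aeval_iff]
    rw [← forall_mem_boundedSubalgebra_image_aeval_iff] at hZ
    refine fun j ↦ (hcriterion _).1 (hint (X j)) _ fun p ↦ ?_
    exact algHom_mem_of_forall_X_mem (φ := aeval F) (fun i ↦ by rw [aeval_X]; exact hZ i) p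
  · intro h b
    refine (hcriterion b).2 fun Ω hΩ ↦ ?_
    have hsurj : Function.Surjective (aeval : (σ → 𝕜) → MvPolynomial σ 𝕜 →ₐ[𝕜] 𝕜) :=
      fun χ ↦ ⟨_, (aeval_unique χ).symm⟩
    obtain ⟨Z, rfl⟩ := hsurj.image_surjective Ω
    have hF (i : τ) : F i ∈ boundedSubalgebra (aeval '' Z) := by
      rw [← aeval_X (R := 𝕜) F i]
      exact hΩ (X i)
    have hX := forall_X_mem_boundedSubalgebra_image_aeval_iff.2
      (h Z (forall_mem_boundedSubalgebra_image_aeval_iff.1 hF))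
    exact algHom_mem_of_forall_X_mem (φ := AlgHom.id 𝕜 _) hX b

end PolynomialMaps

theorem stmt_1_general {σ τ : Type*} [Finite σ] [Finite τ] (F : τ → MvPolynomial σ ℂ)
    (f : (σ → ℂ) → (τ → ℂ)) (hf : ∀ x i, f x i = eval x (F i)) :
    (∀ K : Set (τ → ℂ), IsCompact K → IsCompact (f ⁻¹' K)) ↔
      (aeval F : MvPolynomial τ ℂ →ₐ[ℂ] MvPolynomial σ ℂ).toRingHom.IsIntegral := by
  have := Fintype.ofFinite σ
  have := Fintype.ofFinite τ
  obtain rfl : f = fun x i ↦ eval x (F i) := funext fun x ↦ funext fun i ↦ hf x i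
  have hcont : Continuous fun (x : σ → ℂ) i ↦ eval x (F i) :=
    continuous_pi fun i ↦ continuous_eval (F i)
  rw [isIntegral_aeval_iff_forall_isBounded]
  constructor
  · intro hproper Z hZ
    exact (hproper _ hZ.isCompact_closure).isBounded.subset
      (Set.image_subset_iff.1 subset_closure)
  · intro h K hK
    refine Metric.isCompact_of_isClosed_isBounded (hK.isClosed.preimage hcont) (h _ ?_)
    exact hK.isBounded.subset (Set.image_preimage_subset _ _)

/-- A dominant polynomial map `f : ℂⁿ → ℂⁿ` (dominant: the image is
Zariski dense, i.e. every polynomial vanishing on the image is zero) is proper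
(preimages of compact sets are compact) if and only if the push-forward ring map
`f* : ℂ[s₁,…,sₙ] → ℂ[x₁,…,xₙ]`, `sᵢ ↦ fᵢ`, is integral, i.e. `ℂ[x₁,…,xₙ]` is an
integral extension of the image of `f*`. -/
theorem stmt_1 (n : ℕ) (F : Fin n → MvPolynomial (Fin n) ℂ)
    (f : (Fin n → ℂ) → (Fin n → ℂ))
    (hf : ∀ x i, f x i = MvPolynomial.eval x (F i))
    (hdom : ∀ P : MvPolynomial (Fin n) ℂ,
      (∀ y ∈ Set.range f, MvPolynomial.eval y P = 0) → P = 0) :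
    (∀ K : Set (Fin n → ℂ), IsCompact K → IsCompact (f ⁻¹' K)) ↔
      (MvPolynomial.aeval F : MvPolynomial (Fin n) ℂ →ₐ[ℂ]
        MvPolynomial (Fin n) ℂ).toRingHom.IsIntegral :=
  stmt_1_general F f hf
end

section
/- For d ≥ 4 and λ, μ ∈ Γ_d with λ^d ≠ μ^d, the maps f_{d,λ}(x,y) = (x, y^{d+1}/(d+1) + (λ/2)x^{d−1}y² + x^d y) and f_{d,μ} are not equivalent under pre- and post-composition with polynomial automorphisms of ℂ². -/
/-- The binary form `F_{d,λ}` is square-free. -/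
def IsSquareFreeForm (d : ℕ) (lam : ℂ) : Prop :=
  ∃ α β : Fin d → ℂ,
    (∀ x y : ℂ, y ^ d + lam * x ^ (d - 1) * y + x ^ d = ∏ i, (α i * x + β i * y)) ∧
    ∀ i j, i ≠ j → α i * β j ≠ α j * β i

/-- `f : ℂ² → ℂ²` is a polynomial map. -/
def IsPolyMap (f : ℂ × ℂ → ℂ × ℂ) : Prop :=
  ∃ P Q : MvPolynomial (Fin 2) ℂ, ∀ p : ℂ × ℂ,
    f p = (MvPolynomial.eval ![p.1, p.2] P, MvPolynomial.eval ![p.1, p.2] Q)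

/-- A polynomial automorphism of `ℂ²`. -/
def IsPolyAut (Φ : ℂ × ℂ ≃ ℂ × ℂ) : Prop :=
  IsPolyMap Φ ∧ IsPolyMap Φ.symm

/-- The map `f_{d,λ}(x,y) = (x, y^{d+1}/(d+1) + (λ/2) x^{d−1} y² + x^d y)`. -/
noncomputable def fdl (d : ℕ) (lam : ℂ) (p : ℂ × ℂ) : ℂ × ℂ :=
  (p.1, p.2 ^ (d + 1) / (d + 1) + lam / 2 * p.1 ^ (d - 1) * p.2 ^ 2 + p.1 ^ d * p.2)

/-!
The Jacobian determinant of `f_{d,λ}` is the binary form `F_{d,λ} = y^d + λ x^{d-1} y + x^d`, so an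
equivalence makes `F_{d,μ}` a unit times `F_{d,λ} ∘ Φ₁` near the origin. Now `F_{d,λ}` vanishes to
order `d` at the origin and to lower order elsewhere, since as a polynomial in `y` it has no term of
degree `d - 1`; hence `Φ₁` fixes the origin. Comparing leading forms there,
`F_{d,μ} = k F_{d,λ} ∘ A` with `A` the derivative of `Φ₁`. As `A` also maps the kernel of `Df_{d,μ}`
to the kernel of `Df_{d,λ}`, and both kernels are the line `x = 0`, it is lower triangular. The
missing term of degree `d - 1` then makes it diagonal, and comparing coefficients gives
`λ^d = μ^d`. Knowing that `A` preserves the line `x = 0` replaces the classification of the forms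
`F_{d,λ}` up to arbitrary linear changes of variables.
-/

open Asymptotics Filter Topology

section Polynomial

open Polynomial

lemma coeff_X_add_C_pow_add_linear {R : Type*} [CommRing R] {d : ℕ} (hd : 3 ≤ d) (s b c : R) :
    ((X + C s) ^ d + (C b * X + C c)).coeff (d - 1) = d * s := by
  have hsub : d - (d - 1) = 1 := by omega
  have hchoose : d.choose (d - 1) = d := by
    rw [Nat.choose_symm (by omega : 1 ≤ d), Nat.choose_one_right]
  have hlinear : (C b * X + C c).coeff (d - 1) = 0 :=
    coeff_eq_zero_of_natDegree_lt (natDegree_linear_le.trans_lt (by omega))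
  rw [coeff_add, hlinear, coeff_X_add_C_pow, hsub, hchoose, pow_one, add_zero, mul_comm]

lemma eq_of_add_pow_add_linear_eq {K : Type*} [Field K] [CharZero K] {d : ℕ} (hd : 3 ≤ d)
    {s b c s' b' c' : K}
    (h : ∀ t, (t + s) ^ d + (b * t + c) = (t + s') ^ d + (b' * t + c')) : s = s' := by
  have hpoly : (X + C s) ^ d + (C b * X + C c) = (X + C s') ^ d + (C b' * X + C c') :=
    Polynomial.funext fun t => by simpa using h t
  have hcoeff := congrArg (coeff · (d - 1)) hpoly
  simp only [coeff_X_add_C_pow_add_linear hd] at hcoeff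
  exact mul_left_cancel₀ (Nat.cast_ne_zero.2 (by omega)) hcoeff

lemma X_pow_dvd_of_isBigO {𝕜 : Type*} [NontriviallyNormedField 𝕜] {p : 𝕜[X]} {n : ℕ}
    (h : (fun t => p.eval t) =O[𝓝 0] fun t => t ^ n) : X ^ n ∣ p := by
  induction n with
  | zero => simp
  | succ n ih =>
    obtain ⟨q, rfl⟩ := ih (h.trans (isLittleO_pow_pow n.lt_succ_self).isBigO)
    have hq : (fun t => q.eval t) =O[𝓝[≠] 0] fun t => t := by
      refine ((isBigO_refl (fun t : 𝕜 => (t ^ n)⁻¹) _).mul (h.mono nhdsWithin_le_nhds)).congr' ?_ ?_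
      all_goals
        filter_upwards [self_mem_nhdsWithin] with t (ht : t ≠ 0)
        have htn : t ^ n ≠ 0 := pow_ne_zero n ht
      · rw [eval_mul, eval_pow, eval_X, inv_mul_cancel_left₀ htn]
      · rw [pow_succ, inv_mul_cancel_left₀ htn]
    have hq0 : q.eval 0 = 0 :=
      tendsto_nhds_unique (q.continuous.continuousAt.tendsto.mono_left nhdsWithin_le_nhds)
        (hq.trans_tendsto (tendsto_id.mono_left nhdsWithin_le_nhds))
    rw [pow_succ]
    exact mul_dvd_mul_left _ (X_dvd_iff.2 (by rwa [coeff_zero_eq_eval_zero]))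

end Polynomial

section CriticalForm

/-- The binary form `F_{d,λ} = y^d + λ x^{d-1} y + x^d` at `p = (x, y)`. Over `ℂ` it is the Jacobian
determinant of `f_{d,λ}`, so it cuts out the critical locus. -/
def criticalForm {R : Type*} [CommSemiring R] (d : ℕ) (lam : R) (p : R × R) : R :=
  p.2 ^ d + lam * p.1 ^ (d - 1) * p.2 + p.1 ^ d

lemma criticalForm_smul {R : Type*} [CommSemiring R] {d : ℕ} (hd : d ≠ 0) (lam t : R) (p : R × R) :
    criticalForm d lam (t • p) = t ^ d * criticalForm d lam p := by
  obtain ⟨k, rfl⟩ := Nat.exists_eq_succ_of_ne_zero hd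
  simp only [criticalForm, Prod.smul_fst, Prod.smul_snd, smul_eq_mul, Nat.succ_eq_add_one,
    Nat.add_sub_cancel]
  ring

section Field

variable {K : Type*} [Field K] [CharZero K] {d : ℕ} {lam mu k a c e : K}

lemma shear_eq_zero_of_criticalForm_eq (hd : 3 ≤ d)
    (h : ∀ x y, criticalForm d mu (x, y) = k * criticalForm d lam (a * x, c * x + e * y)) :
    c = 0 := by
  have hke : k * e ^ d = 1 := by
    simpa [criticalForm, show d ≠ 0 by omega, show d - 1 ≠ 0 by omega] using (h 0 1).symm
  have he : e ≠ 0 := by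
    rintro rfl
    simp [show d ≠ 0 by omega] at hke
  have hshift (t : K) : (t + 0) ^ d + (mu * t + 1) = (t + c / e) ^ d +
      (k * lam * a ^ (d - 1) * e * t + (k * lam * a ^ (d - 1) * c + k * a ^ d)) := by
    have hpow : (c + e * t) ^ d = e ^ d * (t + c / e) ^ d := by
      rw [← mul_pow]
      congr 1
      field_simp
      ring
    have ht := h 1 t
    simp only [criticalForm, mul_one, one_pow, hpow] at ht
    linear_combination ht + (t + c / e) ^ d * hke
  have hce : 0 = c / e := eq_of_add_pow_add_linear_eq hd hshift
  exact (div_eq_zero_iff.1 hce.symm).resolve_right he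

lemma pow_eq_pow_of_criticalForm_eq (hd : 3 ≤ d)
    (h : ∀ x y, criticalForm d mu (x, y) = k * criticalForm d lam (a * x, c * x + e * y)) :
    lam ^ d = mu ^ d := by
  obtain rfl := shear_eq_zero_of_criticalForm_eq hd h
  have hd1 : d - 1 ≠ 0 := by omega
  have hd0 : d ≠ 0 := by omega
  simp only [criticalForm, zero_mul, zero_add] at h
  have hke : k * e ^ d = 1 := by simpa [hd0, hd1] using (h 0 1).symm
  have hka : k * a ^ d = 1 := by simpa [hd0] using (h 1 0).symm
  have hmu : mu = k * lam * a ^ (d - 1) * e := by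
    have h11 := h 1 1
    simp only [one_pow, mul_one] at h11
    linear_combination h11 + hke + hka
  calc lam ^ d = (k * a ^ d) ^ (d - 1) * (k * e ^ d) * lam ^ d := by simp [hka, hke]
    _ = k ^ (d - 1 + 1) * lam ^ d * (a ^ (d - 1)) ^ d * e ^ d := by ring
    _ = mu ^ d := by rw [Nat.sub_add_cancel (by omega), hmu, mul_pow, mul_pow, mul_pow]

end Field

section NormedField

variable {𝕜 : Type*} [NormedField 𝕜]

@[fun_prop]
lemma continuous_criticalForm (d : ℕ) (lam : 𝕜) : Continuous (criticalForm d lam) := by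
  unfold criticalForm
  fun_prop

lemma criticalForm_isBigO_norm_pow {d : ℕ} (hd : d ≠ 0) (lam : 𝕜) (l : Filter (𝕜 × 𝕜)) :
    criticalForm d lam =O[l] fun p => ‖p‖ ^ d := by
  have hx : (fun p : 𝕜 × 𝕜 => p.1) =O[l] fun p => ‖p‖ := isBigO_fst_prod'.norm_right
  have hy : (fun p : 𝕜 × 𝕜 => p.2) =O[l] fun p => ‖p‖ := isBigO_snd_prod'.norm_right
  have hxy : (fun p : 𝕜 × 𝕜 => lam * p.1 ^ (d - 1) * p.2) =O[l] fun p => ‖p‖ ^ d := by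
    simpa only [← pow_succ, Nat.sub_add_cancel (Nat.one_le_iff_ne_zero.2 hd)] using
      ((hx.pow (d - 1)).const_mul_left lam).mul hy
  exact ((hy.pow d).add hxy).add (hx.pow d)

end NormedField

lemma eq_zero_of_criticalForm_isBigO {𝕜 : Type*} [NontriviallyNormedField 𝕜] [CharZero 𝕜] {d : ℕ}
    (hd : 3 ≤ d) {lam : 𝕜} {q : 𝕜 × 𝕜}
    (h : criticalForm d lam =O[𝓝 q] fun p => ‖p - q‖ ^ d) : q = 0 := by
  open Polynomial in
  set P : 𝕜[X] := (X + C q.2) ^ d +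
    (C (lam * q.1 ^ (d - 1)) * X + C (lam * q.1 ^ (d - 1) * q.2 + q.1 ^ d)) with hP
  have hP_isBigO : (fun t => P.eval t) =O[𝓝 0] fun t => t ^ d := by
    have hline : Tendsto (fun t : 𝕜 => q + t • (0, 1)) (𝓝 0) (𝓝 q) :=
      Continuous.tendsto' (by fun_prop) _ _ (by simp)
    have hP_eval (t : 𝕜) : criticalForm d lam (q + t • (0, 1)) = P.eval t := by
      simp only [criticalForm, hP, Prod.fst_add, Prod.snd_add, Prod.smul_mk, smul_eq_mul, mul_zero,
        mul_one, add_zero, Polynomial.eval_add, Polynomial.eval_mul, Polynomial.eval_pow,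
        Polynomial.eval_X, Polynomial.eval_C]
      ring
    refine IsBigO.of_norm_right ?_
    simpa [Function.comp_def, Prod.norm_def] using (h.comp_tendsto hline).congr_left hP_eval
  have hq₂ : q.2 = 0 := by
    have hcoeff := Polynomial.X_pow_dvd_iff.1 (X_pow_dvd_of_isBigO hP_isBigO) (d - 1) (by omega)
    rw [hP, coeff_X_add_C_pow_add_linear hd] at hcoeff
    exact (mul_eq_zero.1 hcoeff).resolve_left (Nat.cast_ne_zero.2 (by omega))
  have hq₁ : q.1 = 0 := by
    have hFq : criticalForm d lam q = 0 := h.eq_zero_of_norm_pow (by omega)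
    simpa [criticalForm, hq₂, show d ≠ 0 by omega] using hFq
  exact Prod.ext hq₁ hq₂

end CriticalForm

section LocalBiholomorphism

variable {E : Type*} [NormedAddCommGroup E] [NormedSpace ℂ E]

/-- `Φ` is a local biholomorphism at `p`, encoded by the hypotheses of the inverse function theorem.
Over `ℂ`, being `C^1` near `p` means being holomorphic there. -/
structure IsLocalBiholomorphismAt (Φ : E → E) (p : E) : Prop where
  contDiffAt : ContDiffAt ℂ 1 Φ p
  isInvertible_fderiv : (fderiv ℂ Φ p).IsInvertible

namespace IsLocalBiholomorphismAt

variable {Φ : E → E} {p : E}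

lemma differentiableAt (h : IsLocalBiholomorphismAt Φ p) : DifferentiableAt ℂ Φ p :=
  h.contDiffAt.differentiableAt one_ne_zero

lemma eventually_differentiableAt (h : IsLocalBiholomorphismAt Φ p) :
    ∀ᶠ q in 𝓝 p, DifferentiableAt ℂ Φ q :=
  (h.contDiffAt.eventually (by simp)).mono fun _ hq => hq.differentiableAt one_ne_zero

lemma continuousAt_det_fderiv (h : IsLocalBiholomorphismAt Φ p) :
    ContinuousAt (fun q => (fderiv ℂ Φ q).det) p :=
  ContinuousLinearMap.continuous_det.continuousAt.comp
    (h.contDiffAt.continuousAt_fderiv one_ne_zero)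

lemma det_fderiv_ne_zero (h : IsLocalBiholomorphismAt Φ p) : (fderiv ℂ Φ p).det ≠ 0 := by
  obtain ⟨A, hA⟩ := h.isInvertible_fderiv
  rw [← hA]
  exact A.toLinearEquiv.isUnit_det'.ne_zero

lemma isBigO_norm_sub_pow_of_comp [CompleteSpace E] {F : Type*} [Norm F]
    (h : IsLocalBiholomorphismAt Φ p) {g : E → F} {n : ℕ}
    (hg : (g ∘ Φ) =O[𝓝 p] fun q => ‖q - p‖ ^ n) :
    g =O[𝓝 (Φ p)] fun q => ‖q - Φ p‖ ^ n := by
  obtain ⟨A, hA⟩ := h.isInvertible_fderiv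
  have hΦ : HasStrictFDerivAt Φ (A : E →L[ℂ] E) p :=
    hA ▸ h.contDiffAt.hasStrictFDerivAt one_ne_zero
  have hsub : (fun q => q - p) =O[𝓝 p] fun q => Φ q - Φ p :=
    (hΦ.hasFDerivAt.isTheta_sub A.toHomeomorph.isInducing).isBigO_symm
  rw [← hΦ.map_nhds_eq_of_equiv, isBigO_map]
  exact hg.trans (hsub.norm_norm.pow n)

end IsLocalBiholomorphismAt

lemma det_fderiv_comp {f g : E → E} {p : E} (hg : DifferentiableAt ℂ g (f p))
    (hf : DifferentiableAt ℂ f p) :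
    (fderiv ℂ (g ∘ f) p).det = (fderiv ℂ g (f p)).det * (fderiv ℂ f p).det := by
  rw [fderiv_comp p hg hf]
  exact LinearMap.det_comp _ _

end LocalBiholomorphism

lemma eq_mul_comp_fderiv_of_homogeneous {𝕜 E F : Type*} [NontriviallyNormedField 𝕜]
    [NormedAddCommGroup E] [NormedSpace 𝕜 E] [NormedAddCommGroup F] [NormedSpace 𝕜 F] {d : ℕ}
    {G : E → 𝕜} {H : F → 𝕜} (hG : ∀ (t : 𝕜) v, G (t • v) = t ^ d * G v)
    (hH : ∀ (t : 𝕜) v, H (t • v) = t ^ d * H v) (hHc : Continuous H) {Φ : E → F}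
    (hΦ : DifferentiableAt 𝕜 Φ 0) (hΦ0 : Φ 0 = 0) {u : E → 𝕜} (hu : ContinuousAt u 0)
    (h : ∀ᶠ p in 𝓝 0, G p = u p * H (Φ p)) (v : E) :
    G v = u 0 * H (fderiv 𝕜 Φ 0 v) := by
  have hline : Tendsto (fun t : 𝕜 => t • v) (𝓝[≠] 0) (𝓝 0) :=
    tendsto_nhdsWithin_of_tendsto_nhds (Continuous.tendsto' (by fun_prop) _ _ (zero_smul 𝕜 v))
  have hslope : Tendsto (fun t : 𝕜 => t⁻¹ • Φ (t • v)) (𝓝[≠] 0) (𝓝 (fderiv 𝕜 Φ 0 v)) := by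
    simpa [hΦ0] using (hΦ.hasFDerivAt.hasLineDerivAt v).tendsto_slope_zero
  refine tendsto_nhds_unique (tendsto_const_nhds.congr' ?_)
    ((hu.tendsto.comp hline).mul ((hHc.tendsto _).comp hslope))
  filter_upwards [hline.eventually h, self_mem_nhdsWithin] with t ht (ht0 : t ≠ 0)
  simp only [Function.comp_apply, hH, inv_pow]
  rw [hG] at ht
  field_simp
  linear_combination ht

section Equivalence

lemma fderiv_fdl_apply (d : ℕ) (lam : ℂ) (p v : ℂ × ℂ) :
    fderiv ℂ (fdl d lam) p v = (v.1, (lam / 2 * ((d - 1 : ℕ) * p.1 ^ (d - 2)) * p.2 ^ 2 +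
      d * p.1 ^ (d - 1) * p.2) * v.1 + criticalForm d lam p * v.2) := by
  have hx : HasFDerivAt (fun q : ℂ × ℂ => q.1) (ContinuousLinearMap.fst ℂ ℂ ℂ) p := hasFDerivAt_fst
  have hy : HasFDerivAt (fun q : ℂ × ℂ => q.2) (ContinuousLinearMap.snd ℂ ℂ ℂ) p := hasFDerivAt_snd
  have hd : (d : ℂ) + 1 ≠ 0 := d.cast_add_one_ne_zero
  have hsnd := (((hy.pow (d + 1)).mul_const ((d + 1 : ℂ)⁻¹)).add
    (((hx.pow (d - 1)).const_mul (lam / 2)).mul (hy.pow 2))).add ((hx.pow d).mul hy)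
  have hfdl := (hx.prodMk hsnd).congr_of_eventuallyEq (f₁ := fdl d lam)
    (.of_forall fun q => by simp [fdl, div_eq_mul_inv])
  rw [hfdl.fderiv]
  simp only [criticalForm, Nat.sub_sub, Nat.reduceAdd, add_tsub_cancel_right, nsmul_eq_mul,
    Nat.cast_add, Nat.cast_one, Nat.add_one_sub_one, pow_one, Nat.cast_ofNat, smul_eq_mul,
    ContinuousLinearMap.prod_apply, ContinuousLinearMap.coe_fst', ContinuousLinearMap.coe_snd',
    add_apply, smul_apply, Prod.mk.injEq, true_and]
  field_simp
  ring

lemma differentiable_fdl (d : ℕ) (lam : ℂ) : Differentiable ℂ (fdl d lam) := by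
  unfold fdl
  fun_prop

lemma det_fderiv_fdl (d : ℕ) (lam : ℂ) (p : ℂ × ℂ) :
    (fderiv ℂ (fdl d lam) p).det = criticalForm d lam p := by
  rw [ContinuousLinearMap.det, ← LinearMap.det_toMatrix (Module.Basis.finTwoProd ℂ),
    Matrix.det_fin_two]
  simp [LinearMap.toMatrix_apply, fderiv_fdl_apply]

lemma fderiv_fdl_zero_apply {d : ℕ} (hd : d ≠ 0) (lam : ℂ) (v : ℂ × ℂ) :
    fderiv ℂ (fdl d lam) 0 v = (v.1, 0) := by
  simp [fderiv_fdl_apply, criticalForm, hd]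

variable {d : ℕ} {lam mu : ℂ} {Φ₁ Φ₂ : ℂ × ℂ → ℂ × ℂ}

lemma exists_criticalForm_eq_unit_mul_comp (h₁ : IsLocalBiholomorphismAt Φ₁ 0)
    (h₂ : IsLocalBiholomorphismAt Φ₂ (fdl d lam (Φ₁ 0)))
    (h : fdl d mu =ᶠ[𝓝 0] Φ₂ ∘ fdl d lam ∘ Φ₁) :
    ∃ u : ℂ × ℂ → ℂ, ContinuousAt u 0 ∧ u 0 ≠ 0 ∧
      ∀ᶠ p in 𝓝 0, criticalForm d mu p = u p * criticalForm d lam (Φ₁ p) := by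
  have hcont : ContinuousAt (fdl d lam ∘ Φ₁) 0 :=
    (differentiable_fdl d lam).continuous.continuousAt.comp h₁.contDiffAt.continuousAt
  refine ⟨fun p => (fderiv ℂ Φ₂ (fdl d lam (Φ₁ p))).det * (fderiv ℂ Φ₁ p).det,
    (ContinuousAt.comp (f := fdl d lam ∘ Φ₁) h₂.continuousAt_det_fderiv hcont).mul
      h₁.continuousAt_det_fderiv,
    mul_ne_zero h₂.det_fderiv_ne_zero h₁.det_fderiv_ne_zero, ?_⟩
  filter_upwards [h.fderiv (𝕜 := ℂ), h₁.eventually_differentiableAt,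
    hcont.eventually h₂.eventually_differentiableAt] with p hp hp₁ hp₂
  have hfl : DifferentiableAt ℂ (fdl d lam) (Φ₁ p) := differentiable_fdl d lam _
  rw [← det_fderiv_fdl d mu, hp, det_fderiv_comp hp₂ (hfl.comp p hp₁), det_fderiv_comp hfl hp₁,
    det_fderiv_fdl, Function.comp_apply]
  ring

lemma map_zero_of_criticalForm_eq (hd : 3 ≤ d) (h₁ : IsLocalBiholomorphismAt Φ₁ 0)
    {u : ℂ × ℂ → ℂ} (hu : ContinuousAt u 0) (hu0 : u 0 ≠ 0)
    (h : ∀ᶠ p in 𝓝 0, criticalForm d mu p = u p * criticalForm d lam (Φ₁ p)) : Φ₁ 0 = 0 := by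
  refine eq_zero_of_criticalForm_isBigO hd (lam := lam) (h₁.isBigO_norm_sub_pow_of_comp ?_)
  have hcomp : (fun p => (u p)⁻¹ * criticalForm d mu p) =ᶠ[𝓝 0] criticalForm d lam ∘ Φ₁ := by
    filter_upwards [h, hu.eventually_ne hu0] with p hp hup
    rw [hp, inv_mul_cancel_left₀ hup, Function.comp_apply]
  refine IsBigO.congr' ?_ hcomp .rfl
  simpa using ((hu.inv₀ hu0).tendsto.isBigO_one ℝ).mul
    (criticalForm_isBigO_norm_pow (by omega) mu (𝓝 0))

lemma fst_fderiv_apply_zero_one_eq_zero (hd : d ≠ 0) (h₁ : IsLocalBiholomorphismAt Φ₁ 0)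
    (h₂ : IsLocalBiholomorphismAt Φ₂ (fdl d lam (Φ₁ 0)))
    (h : fdl d mu =ᶠ[𝓝 0] Φ₂ ∘ fdl d lam ∘ Φ₁) (hΦ₁ : Φ₁ 0 = 0) :
    (fderiv ℂ Φ₁ 0 (0, 1)).1 = 0 := by
  have hfl : DifferentiableAt ℂ (fdl d lam) (Φ₁ 0) := differentiable_fdl d lam _
  have hchain : fderiv ℂ (fdl d mu) 0 (0, 1) = fderiv ℂ Φ₂ (fdl d lam (Φ₁ 0))
      (fderiv ℂ (fdl d lam) (Φ₁ 0) (fderiv ℂ Φ₁ 0 (0, 1))) := by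
    rw [h.fderiv_eq, fderiv_comp 0 h₂.differentiableAt (hfl.comp 0 h₁.differentiableAt),
      fderiv_comp 0 hfl h₁.differentiableAt]
    rfl
  have hker : fderiv ℂ (fdl d lam) (Φ₁ 0) (fderiv ℂ Φ₁ 0 (0, 1)) = 0 := by
    refine h₂.isInvertible_fderiv.injective ?_
    rw [← hchain, fderiv_fdl_zero_apply hd, map_zero, Prod.mk_zero_zero]
  rw [hΦ₁, fderiv_fdl_zero_apply hd] at hker
  exact congrArg Prod.fst hker

theorem stmt_10_general (hd : 3 ≤ d) (h₁ : IsLocalBiholomorphismAt Φ₁ 0)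
    (h₂ : IsLocalBiholomorphismAt Φ₂ (fdl d lam (Φ₁ 0)))
    (h : fdl d mu =ᶠ[𝓝 0] Φ₂ ∘ fdl d lam ∘ Φ₁) : lam ^ d = mu ^ d := by
  obtain ⟨u, hu, hu0, hF⟩ := exists_criticalForm_eq_unit_mul_comp h₁ h₂ h
  have hΦ₁ : Φ₁ 0 = 0 := map_zero_of_criticalForm_eq hd h₁ hu hu0 hF
  set A := fderiv ℂ Φ₁ 0
  have hlead (v : ℂ × ℂ) : criticalForm d mu v = u 0 * criticalForm d lam (A v) :=
    eq_mul_comp_fderiv_of_homogeneous (criticalForm_smul (by omega) mu)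
      (criticalForm_smul (by omega) lam) (by fun_prop) h₁.differentiableAt hΦ₁ hu hF v
  have hA : (A (0, 1)).1 = 0 := fst_fderiv_apply_zero_one_eq_zero (by omega) h₁ h₂ h hΦ₁
  have hA_apply (x y : ℂ) :
      A (x, y) = ((A (1, 0)).1 * x, (A (1, 0)).2 * x + (A (0, 1)).2 * y) := by
    have hbasis : (x, y) = x • ((1, 0) : ℂ × ℂ) + y • (0, 1) := by simp
    rw [hbasis, map_add, map_smul, map_smul]
    ext <;> simp [hA, mul_comm]
  exact pow_eq_pow_of_criticalForm_eq hd fun x y => by rw [hlead, hA_apply]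

end Equivalence

section PolynomialAutomorphism

lemma IsPolyMap.contDiff {f : ℂ × ℂ → ℂ × ℂ} (hf : IsPolyMap f) {n : WithTop ℕ∞} :
    ContDiff ℂ n f := by
  obtain ⟨P, Q, hPQ⟩ := hf
  have hcoord (i : Fin 2) (p : ℂ × ℂ) : AnalyticAt ℂ (fun p : ℂ × ℂ => ![p.1, p.2] i) p := by
    fin_cases i
    exacts [analyticAt_fst, analyticAt_snd]
  have heval (R : MvPolynomial (Fin 2) ℂ) :
      ContDiff ℂ n fun p : ℂ × ℂ => MvPolynomial.eval ![p.1, p.2] R :=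
    contDiff_iff_contDiffAt.2 fun p => (AnalyticAt.aeval_mvPolynomial (hcoord · p) R).contDiffAt
  rw [funext hPQ]
  exact (heval P).prodMk (heval Q)

lemma IsPolyAut.symm {Φ : ℂ × ℂ ≃ ℂ × ℂ} (hΦ : IsPolyAut Φ) : IsPolyAut Φ.symm :=
  ⟨hΦ.2, hΦ.1⟩

lemma IsPolyAut.fderiv_symm_comp_fderiv {Φ : ℂ × ℂ ≃ ℂ × ℂ} (hΦ : IsPolyAut Φ) (p : ℂ × ℂ) :
    (fderiv ℂ Φ.symm (Φ p)).comp (fderiv ℂ Φ p) = .id ℂ (ℂ × ℂ) := by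
  rw [← fderiv_comp p (hΦ.2.contDiff.differentiable one_ne_zero _)
    (hΦ.1.contDiff.differentiable one_ne_zero p), Φ.symm_comp_self, fderiv_id]

lemma IsPolyAut.isLocalBiholomorphismAt {Φ : ℂ × ℂ ≃ ℂ × ℂ} (hΦ : IsPolyAut Φ) (p : ℂ × ℂ) :
    IsLocalBiholomorphismAt Φ p where
  contDiffAt := hΦ.1.contDiff.contDiffAt
  isInvertible_fderiv := by
    refine .of_inverse ?_ (hΦ.fderiv_symm_comp_fderiv p)
    simpa using hΦ.symm.fderiv_symm_comp_fderiv (Φ p)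

end PolynomialAutomorphism

/-- For `d ≥ 4` and `λ, μ ∈ Γ_d` with `λ^d ≠ μ^d`, the maps
`f_{d,λ}` and `f_{d,μ}` are not equivalent under pre- and post-composition with
polynomial automorphisms of `ℂ²`. -/
theorem stmt_10 (d : ℕ) (hd : 4 ≤ d) (lam mu : ℂ)
    (hlam : IsSquareFreeForm d lam) (hmu : IsSquareFreeForm d mu)
    (hne : lam ^ d ≠ mu ^ d) :
    ¬ ∃ Φ₁ Φ₂ : ℂ × ℂ ≃ ℂ × ℂ, IsPolyAut Φ₁ ∧ IsPolyAut Φ₂ ∧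
      ∀ p : ℂ × ℂ, fdl d mu p = Φ₂ (fdl d lam (Φ₁ p)) :=
  fun ⟨_, _, h₁, h₂, h⟩ => hne <| stmt_10_general (by omega) (h₁.isLocalBiholomorphismAt _)
    (h₂.isLocalBiholomorphismAt _) (.of_forall h)
end

section
/- Let G ⊂ GL(2,ℂ) be a finite complex reflection group. Then there exist two algebraically independent homogeneous polynomials φ₁, φ₂ ∈ ℂ[x,y]^G with |G| = deg(φ₁)·deg(φ₂) if and only if there exist two algebraically independent homogeneous G-invariant polynomials φ₁, φ₂ such that 1, φ₁, φ₂ generate ℂ[x,y]^G as a ℂ-algebra. -/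
open MvPolynomial

/-- A polynomial is `G`-invariant (as a function on `ℂ²`). -/
def IsInvariantPoly (G : Subgroup (GL (Fin 2) ℂ)) (p : MvPolynomial (Fin 2) ℂ) : Prop :=
  ∀ g ∈ G, ∀ x : Fin 2 → ℂ,
    eval (Matrix.mulVec (g : Matrix (Fin 2) (Fin 2) ℂ) x) p = eval x p

/-!
Compare the growth in `N` of the dimensions of spaces of polynomials of degree at most `N`. Let `G`
be a finite group acting by degree-preserving automorphisms. A nonvanishing determinant
`det (g • t h)` embeds `|G|` copies of the invariants into all polynomials and all polynomials into
`|G|` copies of the invariants, with a bounded shift of degrees; so the invariants have asymptotic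
density `1 / |G|`. The algebra generated by independent homogeneous `φ i` of degrees `d i` has
density `1 / ∏ i, d i`. If it contains every invariant, then `|G| = ∏ i, d i`.

Conversely, let `f` be an invariant outside `K[φ]`. If `f` is not in `K(φ)`, then
`K[φ] + f * K[φ]` is a direct sum. If `f` is a fraction in `K(φ)`, some variable `φ s` occurs in its
reduced denominator; replacing that `φ s` by `f` in `φ` gives `ψ` for which `K[φ] + f * K[ψ]` is
direct: a relation would be a polynomial equation for `f` over the polynomials in the other `φ i`,
and the denominator would divide its leading coefficient, in which `φ s` does not occur. Either way
the second summand has positive density, so `|G| < ∏ i, d i`.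
-/

theorem le_of_forall_mul_le_mul_add {f : ℕ → ℕ} {a b c n : ℕ} (h0 : f 0 ≠ 0)
    (hf : ∀ N, f N ≤ (N + 1) ^ n) (h : ∀ N, a * f N ≤ b * f (N + c)) : a ≤ b := by
  have iterate (k : ℕ) : a ^ k * f 0 ≤ b ^ k * f (k * c) := by
    induction k with
    | zero => simp
    | succ k ih =>
      calc a ^ (k + 1) * f 0 = a * (a ^ k * f 0) := by ring
        _ ≤ a * (b ^ k * f (k * c)) := Nat.mul_le_mul_left a ih
        _ = b ^ k * (a * f (k * c)) := by ring
        _ ≤ b ^ k * (b * f (k * c + c)) := Nat.mul_le_mul_left _ (h _)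
        _ = b ^ (k + 1) * f ((k + 1) * c) := by ring_nf
  by_contra! hba
  have ha : (0 : ℝ) < a := by exact_mod_cast (Nat.zero_le b).trans_lt hba
  have hr : |(b / a : ℝ)| < 1 := by
    rw [abs_of_nonneg (by positivity), div_lt_one ha]
    exact_mod_cast hba
  have decay := (tendsto_pow_const_mul_const_pow_of_abs_lt_one n hr).const_mul ((c + 1 : ℝ) ^ n)
  rw [mul_zero] at decay
  refine absurd (ge_of_tendsto decay ?_) one_pos.not_ge
  filter_upwards [Filter.eventually_ge_atTop 1] with k hk
  have bound : a ^ k ≤ b ^ k * (k * (c + 1)) ^ n := calc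
    a ^ k ≤ a ^ k * f 0 := Nat.le_mul_of_pos_right _ (Nat.pos_of_ne_zero h0)
    _ ≤ b ^ k * f (k * c) := iterate k
    _ ≤ b ^ k * (k * c + 1) ^ n := by gcongr; exact hf _
    _ ≤ b ^ k * (k * (c + 1)) ^ n := by gcongr; linarith
  calc (1 : ℝ) ≤ (b ^ k * (k * (c + 1)) ^ n) / a ^ k := by
        rw [one_le_div (by positivity)]
        exact_mod_cast bound
    _ = (c + 1) ^ n * (k ^ n * (b / a) ^ k) := by rw [div_pow, mul_pow]; ring

section WeightCount

variable {σ : Type*}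

/-- The number of exponent vectors of weight at most `N`: the dimension of the space of
polynomials of weighted degree at most `N` when the `i`-th variable has degree `w i`. -/
noncomputable def weightCount (w : σ → ℕ) (N : ℕ) : ℕ :=
  {α : σ →₀ ℕ | Finsupp.weight w α ≤ N}.ncard

theorem weightCount_one_zero_ne_zero [Finite σ] : weightCount (1 : σ → ℕ) 0 ≠ 0 :=
  have finite := Finsupp.finite_of_nat_weight_le (1 : σ → ℕ) (fun _ => one_ne_zero) 0
  ((Set.ncard_pos finite).2 ⟨0, by simp⟩).ne'

theorem weightCount_one_le_pow [Fintype σ] (N : ℕ) :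
    weightCount (1 : σ → ℕ) N ≤ (N + 1) ^ Fintype.card σ := by
  classical
  calc weightCount (1 : σ → ℕ) N
      ≤ (Fintype.piFinset fun _ : σ => Finset.range (N + 1) : Set (σ → ℕ)).ncard := by
        refine Set.ncard_le_ncard_of_injOn (⇑) (fun α hα => ?_) DFunLike.coe_injective.injOn
        refine Finset.mem_coe.2 (Fintype.mem_piFinset.2 fun i => Finset.mem_range_succ_iff.2 ?_)
        exact (Finsupp.le_weight (1 : σ → ℕ) one_ne_zero α).trans hα
    _ = (N + 1) ^ Fintype.card σ := by
        rw [Set.ncard_coe_finset, Fintype.card_piFinset, Finset.prod_const, Finset.card_range,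
          Finset.card_univ]

variable [Fintype σ]

/-- Euclidean division of exponent vectors: the `i`-th exponent is divided by `w i`. -/
noncomputable def exponentDivMod (w : σ → ℕ) [∀ i, NeZero (w i)] :
    (σ →₀ ℕ) ≃ (σ →₀ ℕ) × (∀ i, Fin (w i)) :=
  Finsupp.equivFunOnFinite.trans <|
    (Equiv.piCongrRight fun i => Nat.divModEquiv (w i)).trans <|
    (Equiv.arrowProdEquivProdArrow σ _ _).trans <|
    Finsupp.equivFunOnFinite.symm.prodCongr (Equiv.refl _)

theorem weight_one_eq_weight_exponentDivMod_add (w : σ → ℕ) [∀ i, NeZero (w i)] (α : σ →₀ ℕ) :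
    Finsupp.weight 1 α = Finsupp.weight w (exponentDivMod w α).1 +
      ∑ i, ((exponentDivMod w α).2 i : ℕ) := by
  simp only [Finsupp.weight_eq_sum, ← Finset.sum_add_distrib]
  refine Finset.sum_congr rfl fun i _ => ?_
  simpa [exponentDivMod, Nat.divModEquiv] using (Nat.div_add_mod' (α i) (w i)).symm

theorem ncard_setOf_weight_le_prod_univ (w : σ → ℕ) (N : ℕ) :
    ({α : σ →₀ ℕ | Finsupp.weight w α ≤ N} ×ˢ (Set.univ : Set (∀ i, Fin (w i)))).ncard =
      (∏ i, w i) * weightCount w N := by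
  rw [Set.ncard_prod, Set.ncard_univ, Nat.card_pi, mul_comm]
  simp only [Nat.card_fin, weightCount]

theorem weightCount_one_le_prod_mul (w : σ → ℕ) [∀ i, NeZero (w i)] (N : ℕ) :
    weightCount (1 : σ → ℕ) N ≤ (∏ i, w i) * weightCount w N := by
  rw [← ncard_setOf_weight_le_prod_univ]
  have finite := Finsupp.finite_of_nat_weight_le w (fun i => NeZero.ne (w i)) N
  refine Set.ncard_le_ncard_of_injOn (exponentDivMod w) (fun α hα => ⟨?_, trivial⟩)
    (exponentDivMod w).injective.injOn (finite.prod Set.finite_univ)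
  exact (Nat.le_add_right _ _).trans ((weight_one_eq_weight_exponentDivMod_add w α).ge.trans hα)

theorem prod_mul_weightCount_le (w : σ → ℕ) [∀ i, NeZero (w i)] (N : ℕ) :
    (∏ i, w i) * weightCount w N ≤ weightCount (1 : σ → ℕ) (N + ∑ i, w i) := by
  rw [← ncard_setOf_weight_le_prod_univ]
  refine Set.ncard_le_ncard_of_injOn (exponentDivMod w).symm ?_
    (exponentDivMod w).symm.injective.injOn
    (Finsupp.finite_of_nat_weight_le 1 (fun _ => one_ne_zero) _)
  rintro ⟨q, r⟩ ⟨hq : _ ≤ N, -⟩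
  rw [Set.mem_ofPred_eq, weight_one_eq_weight_exponentDivMod_add w, Equiv.apply_symm_apply]
  exact add_le_add hq (Finset.sum_le_sum fun i _ => (r i).isLt.le)

end WeightCount

section HilbertFunction

variable {K σ : Type*} [Field K]

/-- The dimension of the space of polynomials of degree at most `N` in the subspace `V`: the
affine Hilbert function of `V`. -/
noncomputable def affineHilbertFunction (V : Submodule K (MvPolynomial σ K)) (N : ℕ) : ℕ :=
  Module.finrank K ↥(V ⊓ restrictTotalDegree σ K N)

instance finite_inf_restrictTotalDegree [Finite σ] (V : Submodule K (MvPolynomial σ K)) (N : ℕ) :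
    Module.Finite K ↥(V ⊓ restrictTotalDegree σ K N) :=
  Submodule.finiteDimensional_inf_right _ _

theorem finrank_le_affineHilbertFunction [Finite σ] {M : Type*} [AddCommGroup M] [Module K M]
    {V : Submodule K (MvPolynomial σ K)} {N : ℕ} (L : M →ₗ[K] MvPolynomial σ K)
    (injective : Function.Injective L) (mem : ∀ m, L m ∈ V)
    (totalDegree_le : ∀ m, (L m).totalDegree ≤ N) :
    Module.finrank K M ≤ affineHilbertFunction V N := by
  have L_mem (m : M) : L m ∈ V ⊓ restrictTotalDegree σ K N :=
    ⟨mem m, (mem_restrictTotalDegree ..).2 (totalDegree_le m)⟩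
  exact LinearMap.finrank_le_finrank_of_injective
    ((LinearMap.injective_codRestrict_iff L_mem).2 injective)

theorem affineHilbertFunction_mono [Finite σ] {V W : Submodule K (MvPolynomial σ K)} (h : V ≤ W)
    (N : ℕ) : affineHilbertFunction V N ≤ affineHilbertFunction W N :=
  Submodule.finrank_mono (inf_le_inf_right _ h)

theorem finrank_restrictSupport (s : Set (σ →₀ ℕ)) :
    Module.finrank K (restrictSupport K s) = s.ncard :=
  Module.finrank_eq_nat_card_basis (basisRestrictSupport K s)

theorem restrictTotalDegree_eq_restrictSupport_weight_one (N : ℕ) : restrictTotalDegree σ K N =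
    restrictSupport K {α | Finsupp.weight (1 : σ → ℕ) α ≤ N} := by
  simp only [restrictTotalDegree, Finsupp.weight_apply, Pi.one_apply, smul_eq_mul, mul_one]

theorem finrank_restrictTotalDegree (N : ℕ) :
    Module.finrank K (restrictTotalDegree σ K N) = weightCount (1 : σ → ℕ) N := by
  rw [restrictTotalDegree_eq_restrictSupport_weight_one, finrank_restrictSupport, weightCount]

end HilbertFunction

section DedekindDeterminant

theorem span_range_eval_eq_top {F ι X : Type*} [Field F] [Finite ι] {f : ι → X → F}
    (hf : LinearIndependent F f) :
    Submodule.span F (Set.range fun x i => f i x) = ⊤ := by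
  classical
  have := Fintype.ofFinite ι
  by_contra! ne_top
  obtain ⟨ℓ, ℓ_ne_zero, hℓ⟩ := Submodule.exists_le_ker_of_lt_top _ ne_top.lt_top
  have single_eq (i : ι) : (Pi.single i 1 : ι → F) = fun j => if i = j then 1 else 0 :=
    funext fun j => by simp [Pi.single_apply, eq_comm]
  have relation : ∑ i, ℓ (Pi.single i 1) • f i = 0 := by
    ext x
    have apply_eq_zero : ℓ (fun i => f i x) = 0 := hℓ (Submodule.subset_span ⟨x, rfl⟩)
    rw [ℓ.pi_apply_eq_sum_univ] at apply_eq_zero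
    simpa [single_eq, mul_comm] using apply_eq_zero
  refine ℓ_ne_zero (LinearMap.pi_ext' fun i => LinearMap.ext_ring ?_)
  simpa using Fintype.linearIndependent_iff.1 hf _ relation i

theorem exists_det_ne_zero_of_linearIndependent {F ι X : Type*} [Field F] [Fintype ι]
    [DecidableEq ι] {f : ι → X → F} (hf : LinearIndependent F f) :
    ∃ t : ι → X, (Matrix.of fun i j => f i (t j)).det ≠ 0 := by
  have span_eq_top := span_range_eval_eq_top hf
  obtain ⟨v, v_mem, -, v_independent⟩ :=
    Submodule.exists_fun_fin_finrank_span_eq F (Set.range fun x i => f i x)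
  choose t ht using v_mem
  have card_eq : Fintype.card ι =
      Module.finrank F (Submodule.span F (Set.range fun x i => f i x)) := by
    rw [span_eq_top, finrank_top, Module.finrank_fintype_fun_eq_card]
  let e := Fintype.equivFinOfCardEq card_eq
  refine ⟨t ∘ e, ?_⟩
  rw [← isUnit_iff_ne_zero, ← Matrix.isUnit_iff_isUnit_det,
    ← Matrix.linearIndependent_cols_iff_isUnit]
  have col_eq : (Matrix.of fun i j => f i ((t ∘ e) j)).col = v ∘ e := funext fun j => ht (e j)
  exact col_eq ▸ v_independent.comp e e.injective

theorem exists_det_smul_ne_zero (R G : Type*) [CommRing R] [IsDomain R] [Group G] [Fintype G]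
    [DecidableEq G] [MulSemiringAction G R] [FaithfulSMul G R] :
    ∃ t : G → R, (Matrix.of fun g h => g • t h).det ≠ 0 := by
  let χ (g : G) : R →* FractionRing R :=
    (algebraMap R (FractionRing R)).toMonoidHom.comp (MulSemiringAction.toRingHom G R g)
  have χ_injective : Function.Injective χ := fun g g' h =>
    FaithfulSMul.eq_of_smul_eq_smul fun r =>
      IsFractionRing.injective R (FractionRing R) (DFunLike.congr_fun h r)
  obtain ⟨t, ht⟩ := exists_det_ne_zero_of_linearIndependent
    ((linearIndependent_monoidHom R (FractionRing R)).comp χ χ_injective)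
  refine ⟨t, fun h => ht ?_⟩
  rw [← map_zero (algebraMap R (FractionRing R)), ← h, RingHom.map_det]
  rfl

variable {R G : Type*} [CommRing R] [IsDomain R] [Group G] [Fintype G] [DecidableEq G]
  [MulSemiringAction G R] {t : G → R}

theorem eq_zero_of_sum_mul_eq_zero (det_ne_zero : (Matrix.of fun g h => g • t h).det ≠ 0)
    {b : G → R} (hb : ∀ (g : G) h, g • b h = b h) (sum_eq_zero : ∑ h, t h * b h = 0) : b = 0 := by
  refine Matrix.eq_zero_of_mulVec_eq_zero det_ne_zero (funext fun g => ?_)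
  calc ∑ h, (g • t h) * b h = g • ∑ h, t h * b h := by
        simp only [Finset.smul_sum, smul_mul', hb]
    _ = 0 := by rw [sum_eq_zero, smul_zero]

theorem eq_zero_of_sum_smul_mul_eq_zero (det_ne_zero : (Matrix.of fun g h => g • t h).det ≠ 0)
    {s : R} (sum_eq_zero : ∀ h, ∑ g : G, g • (s * t h) = 0) : s = 0 := by
  have orbit_eq_zero : (fun g : G => g • s) = 0 := by
    refine Matrix.eq_zero_of_vecMul_eq_zero det_ne_zero (funext fun h => ?_)
    simp only [smul_mul'] at sum_eq_zero
    exact sum_eq_zero h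
  simpa using congrFun orbit_eq_zero 1

end DedekindDeterminant

section InvariantGrowth

variable {K σ : Type*} [Field K] [Finite σ] (G : Type*) [Group G] [Finite G]
  [MulSemiringAction G (MvPolynomial σ K)] [SMulCommClass G K (MvPolynomial σ K)]
  [FaithfulSMul G (MvPolynomial σ K)]

theorem exists_card_mul_affineHilbertFunction_fixedPoints_le :
    ∃ c, ∀ N, Nat.card G *
      affineHilbertFunction (FixedPoints.subalgebra K (MvPolynomial σ K) G).toSubmodule N ≤
        weightCount (1 : σ → ℕ) (N + c) := by
  classical
  have := Fintype.ofFinite G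
  obtain ⟨t, det_ne_zero⟩ := exists_det_smul_ne_zero (MvPolynomial σ K) G
  refine ⟨Finset.univ.sup fun g => (t g).totalDegree, fun N => ?_⟩
  set c := Finset.univ.sup fun g => (t g).totalDegree
  let B := (FixedPoints.subalgebra K (MvPolynomial σ K) G).toSubmodule ⊓ restrictTotalDegree σ K N
  let L : (G → B) →ₗ[K] MvPolynomial σ K :=
    ∑ g, LinearMap.mulLeft K (t g) ∘ₗ B.subtype ∘ₗ LinearMap.proj g
  have L_apply (b : G → B) : L b = ∑ g, t g * (b g : MvPolynomial σ K) := by simp [L]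
  have L_injective : Function.Injective L := by
    refine (injective_iff_map_eq_zero L).2 fun b hb => funext fun h => Subtype.ext ?_
    exact congrFun (eq_zero_of_sum_mul_eq_zero det_ne_zero (fun g h => (b h).2.1 g)
      ((L_apply b).symm.trans hb)) h
  have L_mem (b : G → B) : L b ∈ restrictTotalDegree σ K (N + c) := by
    rw [mem_restrictTotalDegree, L_apply, add_comm N]
    refine totalDegree_finsetSum_le fun g _ => (totalDegree_mul _ _).trans (add_le_add ?_ ?_)
    · exact Finset.le_sup (f := fun g => (t g).totalDegree) (Finset.mem_univ g)
    · exact (mem_restrictTotalDegree ..).1 (b g).2.2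
  calc Nat.card G * Module.finrank K B = Module.finrank K (G → B) := by
        rw [Module.finrank_pi_fintype, Finset.sum_const, Finset.card_univ, Nat.card_eq_fintype_card,
          smul_eq_mul]
    _ ≤ Module.finrank K (restrictTotalDegree σ K (N + c)) :=
        LinearMap.finrank_le_finrank_of_injective
          ((LinearMap.injective_codRestrict_iff L_mem).2 L_injective)
    _ = weightCount 1 (N + c) := finrank_restrictTotalDegree _

theorem exists_weightCount_le_card_mul_affineHilbertFunction_fixedPoints
    (totalDegree_smul_le : ∀ (g : G) (p : MvPolynomial σ K), (g • p).totalDegree ≤ p.totalDegree) :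
    ∃ c, ∀ N, weightCount (1 : σ → ℕ) N ≤ Nat.card G *
      affineHilbertFunction (FixedPoints.subalgebra K (MvPolynomial σ K) G).toSubmodule
        (N + c) := by
  classical
  have := Fintype.ofFinite G
  obtain ⟨t, det_ne_zero⟩ := exists_det_smul_ne_zero (MvPolynomial σ K) G
  refine ⟨Finset.univ.sup fun g => (t g).totalDegree, fun N => ?_⟩
  set c := Finset.univ.sup fun g => (t g).totalDegree
  let B := (FixedPoints.subalgebra K (MvPolynomial σ K) G).toSubmodule ⊓
    restrictTotalDegree σ K (N + c)
  let trace : MvPolynomial σ K →ₗ[K] MvPolynomial σ K :=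
    ∑ g : G, DistribSMul.toLinearMap K (MvPolynomial σ K) g
  have trace_apply (p : MvPolynomial σ K) : trace p = ∑ g : G, g • p := by simp [trace]
  have trace_mem (h : G) (s : restrictTotalDegree σ K N) : trace (s * t h) ∈ B := by
    rw [trace_apply]
    refine ⟨fun g => ?_, (mem_restrictTotalDegree ..).2 (totalDegree_finsetSum_le fun g _ => ?_)⟩
    · simp only [Finset.smul_sum, smul_smul]
      exact Equiv.sum_comp (Equiv.mulLeft g) fun g => g • (s * t h : MvPolynomial σ K)
    · refine (totalDegree_smul_le g _).trans ((totalDegree_mul _ _).trans (add_le_add ?_ ?_))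
      · exact (mem_restrictTotalDegree ..).1 s.2
      · exact Finset.le_sup (f := fun g => (t g).totalDegree) (Finset.mem_univ h)
  let L : restrictTotalDegree σ K N →ₗ[K] (G → B) := LinearMap.pi fun h =>
    (trace ∘ₗ LinearMap.mulRight K (t h) ∘ₗ Submodule.subtype _).codRestrict B (trace_mem h)
  have L_injective : Function.Injective L := by
    refine (injective_iff_map_eq_zero L).2 fun s hs => Subtype.ext ?_
    refine eq_zero_of_sum_smul_mul_eq_zero det_ne_zero fun h => ?_
    exact (trace_apply _).symm.trans (congrArg Subtype.val (congrFun hs h))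
  calc weightCount (1 : σ → ℕ) N = Module.finrank K (restrictTotalDegree σ K N) :=
        (finrank_restrictTotalDegree N).symm
    _ ≤ Module.finrank K (G → B) := LinearMap.finrank_le_finrank_of_injective L_injective
    _ = Nat.card G * Module.finrank K B := by
        rw [Module.finrank_pi_fintype, Finset.sum_const, Finset.card_univ, Nat.card_eq_fintype_card,
          smul_eq_mul]

end InvariantGrowth

section FractionField

variable {K σ : Type*} [Field K]

theorem exists_mem_vars_of_not_isUnit {p : MvPolynomial σ K} (p_ne_zero : p ≠ 0)
    (not_isUnit : ¬IsUnit p) : ∃ s, s ∈ p.vars := by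
  by_contra! vars_eq_empty
  have p_eq := vars_eq_empty_iff_eq_C.1 (Finset.eq_empty_of_forall_notMem vars_eq_empty)
  refine not_isUnit (p_eq ▸ (IsUnit.mk0 (p.coeff 0) fun h => p_ne_zero ?_).map C)
  rw [p_eq, h, C_0]

theorem eq_zero_of_dvd_of_mem_supported {b c : MvPolynomial σ K} {s : σ} (hs : s ∈ b.vars)
    (hc : c ∈ supported K {s}ᶜ) (dvd : b ∣ c) : c = 0 := by
  obtain ⟨q, rfl⟩ := dvd
  by_contra! ne_zero
  have degreeOf_eq := degreeOf_mul_eq (n := s) (left_ne_zero_of_mul ne_zero)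
    (right_ne_zero_of_mul ne_zero)
  have notMem_vars : s ∉ (b * q).vars := fun h => mem_supported.1 hc h rfl
  rw [mem_vars_iff_degreeOf_ne_zero] at hs notMem_vars
  omega

section Univariate

variable [DecidableEq σ]

/-- A polynomial seen as a univariate polynomial in the variable `s`, with coefficients in the
other variables. -/
noncomputable def asUnivariate (s : σ) :
    MvPolynomial σ K →ₐ[K] Polynomial (MvPolynomial σ K) :=
  aeval (Function.update (fun i => Polynomial.C (X i)) s Polynomial.X)

theorem coeff_asUnivariate_mem_supported (s : σ) (q : MvPolynomial σ K) (n : ℕ) :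
    (asUnivariate s q).coeff n ∈ supported K {s}ᶜ := by
  induction q using MvPolynomial.induction_on generalizing n with
  | C a =>
    rw [asUnivariate, aeval_C, IsScalarTower.algebraMap_apply K (MvPolynomial σ K),
      Polynomial.algebraMap_eq, Polynomial.coeff_C]
    split_ifs
    exacts [Subalgebra.algebraMap_mem _ a, zero_mem _]
  | add p q hp hq =>
    rw [map_add, Polynomial.coeff_add]
    exact add_mem (hp n) (hq n)
  | mul_X q i hq =>
    rw [map_mul, asUnivariate, aeval_X, ← asUnivariate]
    obtain rfl | hi := eq_or_ne i s
    · rw [Function.update_self]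
      cases n with
      | zero => simp
      | succ n => simpa using hq n
    · rw [Function.update_of_ne hi, Polynomial.coeff_mul_C]
      exact mul_mem (hq n) (X_mem_supported.2 hi)

theorem aeval_asUnivariate {S : Type*} [CommRing S] [Algebra K S] [Algebra (MvPolynomial σ K) S]
    [IsScalarTower K (MvPolynomial σ K) S] (r : S) (s : σ) (q : MvPolynomial σ K) :
    Polynomial.aeval r (asUnivariate s q) =
      aeval (Function.update (fun i => algebraMap (MvPolynomial σ K) S (X i)) s r) q := by
  suffices h : ((Polynomial.aeval r).restrictScalars K).comp (asUnivariate s) =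
      aeval (Function.update (fun i => algebraMap (MvPolynomial σ K) S (X i)) s r) from
    DFunLike.congr_fun h q
  refine MvPolynomial.algHom_ext fun i => ?_
  obtain rfl | hi := eq_or_ne i s <;> simp [asUnivariate, *]

theorem asUnivariate_injective (s : σ) :
    Function.Injective (asUnivariate s : MvPolynomial σ K →ₐ[K] _) := by
  refine Function.LeftInverse.injective (g := Polynomial.aeval (X s)) fun q => ?_
  rw [aeval_asUnivariate]
  simp [Function.update_eq_self]

variable {F : Type*} [Field F] [Algebra K F] [Algebra (MvPolynomial σ K) F]
    [IsScalarTower K (MvPolynomial σ K) F] [IsFractionRing (MvPolynomial σ K) F]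

open IsFractionRing (den) in
theorem exists_forall_add_mul_aeval_update_eq_zero {r : F}
    (hr : r ∉ Set.range (algebraMap (MvPolynomial σ K) F)) :
    ∃ s, ∀ p q : MvPolynomial σ K, algebraMap _ F p + r *
      aeval (Function.update (fun i => algebraMap (MvPolynomial σ K) F (X i)) s r) q = 0 →
      p = 0 ∧ q = 0 := by
  have den_not_isUnit : ¬IsUnit (den (MvPolynomial σ K) r : MvPolynomial σ K) := fun h =>
    hr (IsFractionRing.isInteger_of_isUnit_den h)
  obtain ⟨s, hs⟩ := exists_mem_vars_of_not_isUnit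
    (nonZeroDivisors.ne_zero (den (MvPolynomial σ K) r).2) den_not_isUnit
  refine ⟨s, fun p q h => ?_⟩
  rw [← aeval_asUnivariate] at h
  have q_eq_zero : q = 0 := by
    refine (map_eq_zero_iff _ (asUnivariate_injective s)).1 ?_
    by_contra! ne_zero
    let g := asUnivariate s q * Polynomial.X + Polynomial.C p
    have root : Polynomial.aeval r g = 0 := by simpa [g, mul_comm, add_comm] using h
    have leadingCoeff_eq : g.leadingCoeff = (asUnivariate s q).leadingCoeff := by
      have degree_lt : (Polynomial.C p).degree < (asUnivariate s q * Polynomial.X).degree :=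
        (Polynomial.degree_C_le.trans (Polynomial.zero_le_degree_iff.2 ne_zero)).trans_lt
          (Polynomial.degree_lt_degree_mul_X ne_zero)
      rw [Polynomial.leadingCoeff_add_of_degree_lt' degree_lt, Polynomial.leadingCoeff_mul_X]
    refine ne_zero (Polynomial.leadingCoeff_eq_zero.1 ?_)
    exact eq_zero_of_dvd_of_mem_supported hs (coeff_asUnivariate_mem_supported s q _)
      (leadingCoeff_eq ▸ den_dvd_of_is_root root)
  subst q_eq_zero
  refine ⟨?_, rfl⟩
  simpa using h

end Univariate

section Transcendental

variable {S : Type*} [CommRing S] [IsDomain S] [Algebra K S] {φ : σ → S}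

/-- The embedding of the field of rational functions that substitutes the algebraically independent
elements `φ i` for the variables. -/
noncomputable def fractionEmbedding (hφ : AlgebraicIndependent K φ) :
    FractionRing (MvPolynomial σ K) →ₐ[K] FractionRing S :=
  IsFractionRing.liftAlgHom (g := (IsScalarTower.toAlgHom K S (FractionRing S)).comp (aeval φ))
    ((IsFractionRing.injective S (FractionRing S)).comp hφ)

theorem fractionEmbedding_algebraMap (hφ : AlgebraicIndependent K φ) (p : MvPolynomial σ K) :
    fractionEmbedding hφ (algebraMap _ _ p) = algebraMap S (FractionRing S) (aeval φ p) :=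
  IsFractionRing.lift_algebraMap
    (g := ((IsScalarTower.toAlgHom K S (FractionRing S)).comp (aeval φ)).toRingHom)
    ((IsFractionRing.injective S (FractionRing S)).comp hφ) p

theorem eq_zero_of_aeval_add_mul_aeval_eq_zero (hφ : AlgebraicIndependent K φ) {f : S}
    (hf : ∀ r, fractionEmbedding hφ r ≠ algebraMap S (FractionRing S) f) {p q : MvPolynomial σ K}
    (h : aeval φ p + f * aeval φ q = 0) : p = 0 ∧ q = 0 := by
  have q_eq_zero : q = 0 := by
    by_contra! q_ne_zero
    have aeval_ne_zero : algebraMap S (FractionRing S) (aeval φ q) ≠ 0 := by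
      rwa [← fractionEmbedding_algebraMap hφ, map_ne_zero, map_ne_zero_iff _
        (IsFractionRing.injective _ _)]
    refine hf (-(algebraMap _ _ p / algebraMap _ _ q)) ?_
    rw [map_neg, map_div₀, fractionEmbedding_algebraMap, fractionEmbedding_algebraMap,
      neg_eq_iff_add_eq_zero, div_add' _ _ _ aeval_ne_zero, ← map_mul, ← map_add, h, map_zero,
      zero_div]
  subst q_eq_zero
  exact ⟨(map_eq_zero_iff _ hφ).1 (by simpa using h), rfl⟩

theorem exists_forall_aeval_add_mul_aeval_update_eq_zero [DecidableEq σ]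
    (hφ : AlgebraicIndependent K φ) {f : S} (hf : f ∉ Algebra.adjoin K (Set.range φ))
    {r : FractionRing (MvPolynomial σ K)}
    (hr : fractionEmbedding hφ r = algebraMap S (FractionRing S) f) :
    ∃ s, ∀ p q : MvPolynomial σ K,
      aeval φ p + f * aeval (Function.update φ s f) q = 0 → p = 0 ∧ q = 0 := by
  have r_notMem : r ∉ Set.range (algebraMap (MvPolynomial σ K) (FractionRing _)) := by
    rintro ⟨p, rfl⟩
    rw [fractionEmbedding_algebraMap] at hr
    rw [← IsFractionRing.injective S (FractionRing S) hr,
      Algebra.adjoin_range_eq_range_aeval] at hf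
    exact hf ⟨p, rfl⟩
  obtain ⟨s, hs⟩ := exists_forall_add_mul_aeval_update_eq_zero r_notMem
  refine ⟨s, fun p q h => hs p q ((map_eq_zero (fractionEmbedding hφ)).1 ?_)⟩
  have comp_aeval_eq : (fractionEmbedding hφ).comp (aeval (Function.update
      (fun i => algebraMap (MvPolynomial σ K) (FractionRing _) (X i)) s r)) =
        (IsScalarTower.toAlgHom K S (FractionRing S)).comp (aeval (Function.update φ s f)) := by
    refine MvPolynomial.algHom_ext fun i => ?_
    obtain rfl | hi := eq_or_ne i s <;> simp [fractionEmbedding_algebraMap, *]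
  rw [map_add, map_mul, fractionEmbedding_algebraMap, hr,
    ← map_zero (algebraMap S (FractionRing S)), ← h, map_add, map_mul]
  exact congrArg _ (congrArg _ (DFunLike.congr_fun comp_aeval_eq q))

theorem exists_forall_aeval_add_mul_aeval_eq_zero (hφ : AlgebraicIndependent K φ) {f : S}
    (hf : f ∉ Algebra.adjoin K (Set.range φ)) :
    ∃ ψ : σ → S, (∀ i, ψ i = φ i ∨ ψ i = f) ∧
      ∀ p q : MvPolynomial σ K, aeval φ p + f * aeval ψ q = 0 → p = 0 ∧ q = 0 := by
  classical
  by_cases f_mem : ∃ r, fractionEmbedding hφ r = algebraMap S (FractionRing S) f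
  · obtain ⟨r, hr⟩ := f_mem
    obtain ⟨s, hs⟩ := exists_forall_aeval_add_mul_aeval_update_eq_zero hφ hf hr
    refine ⟨Function.update φ s f, fun i => ?_, hs⟩
    obtain rfl | hi := eq_or_ne i s <;> simp [*]
  · push Not at f_mem
    exact ⟨φ, fun _ => .inl rfl, fun p q => eq_zero_of_aeval_add_mul_aeval_eq_zero hφ f_mem⟩

end Transcendental

end FractionField

section PolynomialSubalgebra

variable {K σ : Type*} [Field K] {φ : σ → MvPolynomial σ K} {d : σ → ℕ}

theorem aeval_mem {S : Type*} [CommRing S] [Algebra K S] {ψ : σ → S} {A : Subalgebra K S}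
    (mem : ∀ i, ψ i ∈ A) (p : MvPolynomial σ K) : aeval ψ p ∈ A := by
  refine Algebra.adjoin_le (Set.range_subset_iff.2 mem) ?_
  rw [Algebra.adjoin_range_eq_range_aeval]
  exact ⟨p, rfl⟩

theorem isHomogeneous_aeval_monomial (hφ : ∀ i, (φ i).IsHomogeneous (d i)) (α : σ →₀ ℕ) (a : K) :
    (aeval φ (monomial α a)).IsHomogeneous (Finsupp.weight d α) := by
  rw [aeval_monomial, ← zero_add (Finsupp.weight d α), Finsupp.weight_apply]
  exact (isHomogeneous_C σ a).mul <| IsHomogeneous.prod _ _ _ fun i _ => by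
    simpa [mul_comm] using (hφ i).pow (α i)

theorem homogeneousComponent_aeval (hφ : ∀ i, (φ i).IsHomogeneous (d i)) (n : ℕ)
    (u : MvPolynomial σ K) :
    homogeneousComponent n (aeval φ u) = aeval φ (weightedHomogeneousComponent d n u) := by
  induction u using MvPolynomial.induction_on' with
  | monomial α a =>
    have monomial_homogeneous := isWeightedHomogeneous_monomial d α a rfl
    rw [homogeneousComponent_of_mem (isHomogeneous_aeval_monomial hφ α a),
      weightedHomogeneousComponent_of_mem monomial_homogeneous, apply_ite (aeval φ), map_zero]
  | add p q hp hq => simp only [map_add, hp, hq]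

theorem totalDegree_aeval_le (hφ : ∀ i, (φ i).totalDegree ≤ d i) {u : MvPolynomial σ K} {N : ℕ}
    (hu : u ∈ restrictSupport K {α | Finsupp.weight d α ≤ N}) : (aeval φ u).totalDegree ≤ N := by
  rw [aeval_def, eval₂_eq]
  refine totalDegree_finsetSum_le fun α hα => ?_
  calc (algebraMap K _ (coeff α u) * ∏ i ∈ α.support, φ i ^ α i).totalDegree
      ≤ ∑ i ∈ α.support, (φ i ^ α i).totalDegree := by
        refine (totalDegree_mul _ _).trans ?_
        rw [algebraMap_eq, totalDegree_C, zero_add]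
        exact totalDegree_finsetProd _ _
    _ ≤ ∑ i ∈ α.support, α i * d i := Finset.sum_le_sum fun i _ =>
        (totalDegree_pow _ _).trans (Nat.mul_le_mul_left _ (hφ i))
    _ = Finsupp.weight d α := by simp only [Finsupp.weight_apply, Finsupp.sum, smul_eq_mul]
    _ ≤ N := (mem_restrictSupport_iff ..).1 hu hα

theorem mem_restrictSupport_of_totalDegree_aeval_le (independent : AlgebraicIndependent K φ)
    (hφ : ∀ i, (φ i).IsHomogeneous (d i)) {u : MvPolynomial σ K} {N : ℕ}
    (hu : (aeval φ u).totalDegree ≤ N) :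
    u ∈ restrictSupport K {α | Finsupp.weight d α ≤ N} := by
  classical
  refine (mem_restrictSupport_iff ..).2 fun α hα => ?_
  by_contra! lt_weight
  have component_eq_zero : weightedHomogeneousComponent d (Finsupp.weight d α) u = 0 := by
    refine (map_eq_zero_iff _ independent).1 ?_
    rw [← homogeneousComponent_aeval hφ]
    exact homogeneousComponent_eq_zero _ _ (hu.trans_lt (not_le.1 lt_weight))
  have coeff_eq := coeff_weightedHomogeneousComponent (w := d) (Finsupp.weight d α) u α
  rw [component_eq_zero, coeff_zero, if_pos rfl] at coeff_eq
  exact mem_support_iff.1 hα coeff_eq.symm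

theorem degree_ne_zero_of_algebraicIndependent (independent : AlgebraicIndependent K φ)
    (homogeneous : ∀ i, (φ i).IsHomogeneous (d i)) (i : σ) : d i ≠ 0 := by
  intro d_eq_zero
  refine independent.transcendental i ?_
  have totalDegree_eq_zero : (φ i).totalDegree = 0 :=
    Nat.le_zero.1 ((homogeneous i).totalDegree_le.trans d_eq_zero.le)
  rw [totalDegree_eq_zero_iff_eq_C.1 totalDegree_eq_zero]
  exact isAlgebraic_algebraMap _

variable [Finite σ]

theorem finite_restrictSupport (hd : ∀ i, d i ≠ 0) (N : ℕ) :
    Module.Finite K (restrictSupport K {α | Finsupp.weight d α ≤ N}) :=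
  have := (Finsupp.finite_of_nat_weight_le d hd N).to_subtype
  .of_basis (basisRestrictSupport K _)

theorem affineHilbertFunction_adjoin_le (hd : ∀ i, d i ≠ 0) (independent : AlgebraicIndependent K φ)
    (hφ : ∀ i, (φ i).IsHomogeneous (d i)) (N : ℕ) :
    affineHilbertFunction (Algebra.adjoin K (Set.range φ)).toSubmodule N ≤ weightCount d N := by
  have le_map : (Algebra.adjoin K (Set.range φ)).toSubmodule ⊓ restrictTotalDegree σ K N ≤
      (restrictSupport K {α | Finsupp.weight d α ≤ N}).map (aeval φ).toLinearMap := by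
    rw [Algebra.adjoin_range_eq_range_aeval]
    rintro _ ⟨⟨u, rfl⟩, hu⟩
    exact ⟨u, mem_restrictSupport_of_totalDegree_aeval_le independent hφ
      ((mem_restrictTotalDegree ..).1 hu), rfl⟩
  have := finite_restrictSupport (K := K) hd N
  rw [weightCount, ← finrank_restrictSupport (K := K)]
  exact (Submodule.finrank_mono le_map).trans (Submodule.finrank_map_le _ _)

theorem weightCount_le_affineHilbertFunction {A : Subalgebra K (MvPolynomial σ K)}
    (independent : AlgebraicIndependent K φ) (mem : ∀ i, φ i ∈ A)
    (totalDegree_le : ∀ i, (φ i).totalDegree ≤ d i) (N : ℕ) :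
    weightCount d N ≤ affineHilbertFunction A.toSubmodule N := by
  rw [weightCount, ← finrank_restrictSupport (K := K)]
  exact finrank_le_affineHilbertFunction ((aeval φ).toLinearMap ∘ₗ Submodule.subtype _)
    (Function.Injective.comp (g := aeval φ) independent Subtype.val_injective)
    (fun u => aeval_mem mem u) fun u => totalDegree_aeval_le totalDegree_le u.2

theorem weightCount_add_weightCount_le_of_forall_aeval_add_mul_aeval_eq_zero
    {A : Subalgebra K (MvPolynomial σ K)} {ψ : σ → MvPolynomial σ K} {e : σ → ℕ}
    {f : MvPolynomial σ K} (hd : ∀ i, d i ≠ 0) (he : ∀ i, e i ≠ 0)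
    (φ_mem : ∀ i, φ i ∈ A) (ψ_mem : ∀ i, ψ i ∈ A) (f_mem : f ∈ A)
    (φ_totalDegree_le : ∀ i, (φ i).totalDegree ≤ d i)
    (ψ_totalDegree_le : ∀ i, (ψ i).totalDegree ≤ e i)
    (injective : ∀ p q : MvPolynomial σ K, aeval φ p + f * aeval ψ q = 0 → p = 0 ∧ q = 0) (N : ℕ) :
    weightCount d N + weightCount e N ≤
      affineHilbertFunction A.toSubmodule (N + f.totalDegree) := by
  let W (w : σ → ℕ) := restrictSupport K {α | Finsupp.weight w α ≤ N}
  have : Module.Finite K (W d) := finite_restrictSupport hd N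
  have : Module.Finite K (W e) := finite_restrictSupport he N
  let L : (W d × W e) →ₗ[K] MvPolynomial σ K :=
    ((aeval φ).toLinearMap ∘ₗ Submodule.subtype _).coprod
      (LinearMap.mulLeft K f ∘ₗ (aeval ψ).toLinearMap ∘ₗ Submodule.subtype _)
  have L_injective : Function.Injective L := by
    refine (injective_iff_map_eq_zero L).2 fun ⟨p, q⟩ h => ?_
    obtain ⟨hp, hq⟩ := injective p q h
    exact Prod.ext (Subtype.ext hp) (Subtype.ext hq)
  calc weightCount d N + weightCount e N = Module.finrank K (W d × W e) := by
        rw [Module.finrank_prod, finrank_restrictSupport, finrank_restrictSupport]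
        rfl
    _ ≤ affineHilbertFunction A.toSubmodule (N + f.totalDegree) := by
      refine finrank_le_affineHilbertFunction L L_injective (fun ⟨p, q⟩ => ?_) fun ⟨p, q⟩ => ?_
      · exact A.add_mem (aeval_mem φ_mem p) (A.mul_mem f_mem (aeval_mem ψ_mem q))
      · refine (totalDegree_add _ _).trans (max_le ?_ ?_)
        · exact (totalDegree_aeval_le φ_totalDegree_le p.2).trans (Nat.le_add_right ..)
        · rw [add_comm N]
          exact (totalDegree_mul _ _).trans <|
            add_le_add_right (totalDegree_aeval_le ψ_totalDegree_le q.2) _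

theorem weightCount_add_weightCount_le_of_notMem_adjoin {A : Subalgebra K (MvPolynomial σ K)}
    (hd : ∀ i, d i ≠ 0) (independent : AlgebraicIndependent K φ) (mem : ∀ i, φ i ∈ A)
    (totalDegree_le : ∀ i, (φ i).totalDegree ≤ d i) {f : MvPolynomial σ K} (f_mem : f ∈ A)
    (f_notMem : f ∉ Algebra.adjoin K (Set.range φ)) (N : ℕ) :
    weightCount d N + weightCount (fun i => d i + f.totalDegree) N ≤
      affineHilbertFunction A.toSubmodule (N + f.totalDegree) := by
  obtain ⟨ψ, hψ, injective⟩ := exists_forall_aeval_add_mul_aeval_eq_zero independent f_notMem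
  refine weightCount_add_weightCount_le_of_forall_aeval_add_mul_aeval_eq_zero hd (fun i => ?_) mem
    (fun i => ?_) f_mem totalDegree_le (fun i => ?_) injective N
  · exact (Nat.add_pos_left (Nat.pos_of_ne_zero (hd i)) _).ne'
  · obtain h | h := hψ i <;> simp [h, mem, f_mem]
  · obtain h | h := hψ i <;> rw [h]
    exacts [(totalDegree_le i).trans (Nat.le_add_right ..), Nat.le_add_left ..]

end PolynomialSubalgebra

section InvariantDegrees

theorem le_of_forall_mul_weightCount_le {σ : Type*} [Finite σ] {a b c : ℕ}
    (h : ∀ N, a * weightCount (1 : σ → ℕ) N ≤ b * weightCount (1 : σ → ℕ) (N + c)) : a ≤ b := by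
  have := Fintype.ofFinite σ
  exact le_of_forall_mul_le_mul_add weightCount_one_zero_ne_zero weightCount_one_le_pow h

variable {K σ G : Type*} [Field K] [Fintype σ] [Group G] [Finite G]
  [MulSemiringAction G (MvPolynomial σ K)] [SMulCommClass G K (MvPolynomial σ K)]
  [FaithfulSMul G (MvPolynomial σ K)] {φ : σ → MvPolynomial σ K} {d : σ → ℕ}

theorem card_le_prod_of_totalDegree_le (hd : ∀ i, d i ≠ 0)
    (independent : AlgebraicIndependent K φ)
    (mem : ∀ i, φ i ∈ FixedPoints.subalgebra K (MvPolynomial σ K) G)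
    (totalDegree_le : ∀ i, (φ i).totalDegree ≤ d i) : Nat.card G ≤ ∏ i, d i := by
  have (i : σ) : NeZero (d i) := ⟨hd i⟩
  obtain ⟨c, hc⟩ := exists_card_mul_affineHilbertFunction_fixedPoints_le (K := K) (σ := σ) G
  refine le_of_forall_mul_weightCount_le (σ := σ) (c := c) fun N => ?_
  calc Nat.card G * weightCount (1 : σ → ℕ) N
      ≤ Nat.card G * ((∏ i, d i) * weightCount d N) := by
        gcongr
        exact weightCount_one_le_prod_mul d N
    _ ≤ Nat.card G * ((∏ i, d i) * affineHilbertFunction _ N) := by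
        gcongr
        exact weightCount_le_affineHilbertFunction independent mem totalDegree_le N
    _ = (∏ i, d i) * (Nat.card G * affineHilbertFunction _ N) := by ring
    _ ≤ (∏ i, d i) * weightCount (1 : σ → ℕ) (N + c) := by
        gcongr
        exact hc N

theorem card_lt_prod_of_notMem_adjoin (hd : ∀ i, d i ≠ 0)
    (independent : AlgebraicIndependent K φ)
    (mem : ∀ i, φ i ∈ FixedPoints.subalgebra K (MvPolynomial σ K) G)
    (totalDegree_le : ∀ i, (φ i).totalDegree ≤ d i) {f : MvPolynomial σ K}
    (f_mem : f ∈ FixedPoints.subalgebra K (MvPolynomial σ K) G)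
    (f_notMem : f ∉ Algebra.adjoin K (Set.range φ)) : Nat.card G < ∏ i, d i := by
  have (i : σ) : NeZero (d i) := ⟨hd i⟩
  set e := fun i => d i + f.totalDegree
  have (i : σ) : NeZero (e i) := ⟨(Nat.add_pos_left (NeZero.pos (d i)) _).ne'⟩
  obtain ⟨c, hc⟩ := exists_card_mul_affineHilbertFunction_fixedPoints_le (K := K) (σ := σ) G
  -- Cleared of denominators, this is `1 / ∏ i, d i + 1 / ∏ i, e i ≤ 1 / |G|`.
  have density_sum_le : Nat.card G * (∏ i, e i + ∏ i, d i) ≤ (∏ i, e i) * ∏ i, d i := by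
    refine le_of_forall_mul_weightCount_le (σ := σ) (c := f.totalDegree + c) fun N => ?_
    calc Nat.card G * (∏ i, e i + ∏ i, d i) * weightCount (1 : σ → ℕ) N
        = Nat.card G * ((∏ i, e i) * weightCount (1 : σ → ℕ) N +
            (∏ i, d i) * weightCount (1 : σ → ℕ) N) := by ring
      _ ≤ Nat.card G * ((∏ i, e i) * ((∏ i, d i) * weightCount d N) +
            (∏ i, d i) * ((∏ i, e i) * weightCount e N)) := by
          gcongr
          exacts [weightCount_one_le_prod_mul d N, weightCount_one_le_prod_mul e N]
      _ = (∏ i, e i) * (∏ i, d i) * (Nat.card G * (weightCount d N + weightCount e N)) := by ring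
      _ ≤ (∏ i, e i) * (∏ i, d i) *
            (Nat.card G * affineHilbertFunction _ (N + f.totalDegree)) := by
          gcongr
          exact weightCount_add_weightCount_le_of_notMem_adjoin hd independent mem totalDegree_le
            f_mem f_notMem N
      _ ≤ (∏ i, e i) * (∏ i, d i) * weightCount (1 : σ → ℕ) (N + (f.totalDegree + c)) := by
          rw [← add_assoc]
          gcongr
          exact hc _
  refine lt_of_mul_lt_mul_left (a := ∏ i, e i) ?_ (Nat.zero_le _)
  have card_mul_prod_pos : 0 < Nat.card G * ∏ i, d i :=
    mul_pos Nat.card_pos (Finset.prod_pos fun i _ => NeZero.pos (d i))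
  linarith

theorem prod_le_card_of_fixedPoints_le_adjoin
    (totalDegree_smul_le : ∀ (g : G) (p : MvPolynomial σ K), (g • p).totalDegree ≤ p.totalDegree)
    (hd : ∀ i, d i ≠ 0) (independent : AlgebraicIndependent K φ)
    (homogeneous : ∀ i, (φ i).IsHomogeneous (d i))
    (le_adjoin : FixedPoints.subalgebra K (MvPolynomial σ K) G ≤ Algebra.adjoin K (Set.range φ)) :
    ∏ i, d i ≤ Nat.card G := by
  have (i : σ) : NeZero (d i) := ⟨hd i⟩
  obtain ⟨c, hc⟩ :=
    exists_weightCount_le_card_mul_affineHilbertFunction_fixedPoints G totalDegree_smul_le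
  refine le_of_forall_mul_weightCount_le (σ := σ) (c := c + ∑ i, d i) fun N => ?_
  calc (∏ i, d i) * weightCount (1 : σ → ℕ) N
      ≤ (∏ i, d i) * (Nat.card G * affineHilbertFunction _ (N + c)) := by
        gcongr
        exact hc N
    _ ≤ (∏ i, d i) * (Nat.card G * weightCount d (N + c)) := by
        gcongr
        exact (affineHilbertFunction_mono le_adjoin _).trans
          (affineHilbertFunction_adjoin_le hd independent homogeneous _)
    _ = Nat.card G * ((∏ i, d i) * weightCount d (N + c)) := by ring
    _ ≤ Nat.card G * weightCount (1 : σ → ℕ) (N + (c + ∑ i, d i)) := by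
        rw [← add_assoc]
        gcongr
        exact prod_mul_weightCount_le d _

theorem card_eq_prod_iff_adjoin_eq_fixedPoints
    (totalDegree_smul_le : ∀ (g : G) (p : MvPolynomial σ K), (g • p).totalDegree ≤ p.totalDegree)
    (independent : AlgebraicIndependent K φ) (homogeneous : ∀ i, (φ i).IsHomogeneous (d i))
    (mem : ∀ i, φ i ∈ FixedPoints.subalgebra K (MvPolynomial σ K) G) :
    Nat.card G = ∏ i, d i ↔
      Algebra.adjoin K (Set.range φ) = FixedPoints.subalgebra K (MvPolynomial σ K) G := by
  have hd := degree_ne_zero_of_algebraicIndependent independent homogeneous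
  have totalDegree_le (i : σ) := (homogeneous i).totalDegree_le
  have adjoin_le := Algebra.adjoin_le (Set.range_subset_iff.2 mem)
  constructor
  · refine fun card_eq => adjoin_le.antisymm fun f f_mem => ?_
    by_contra f_notMem
    exact (card_lt_prod_of_notMem_adjoin hd independent mem totalDegree_le f_mem f_notMem).ne
      card_eq
  · intro adjoin_eq
    exact (card_le_prod_of_totalDegree_le hd independent mem totalDegree_le).antisymm <|
      prod_le_card_of_fixedPoints_le_adjoin totalDegree_smul_le hd independent homogeneous
        adjoin_eq.ge

end InvariantDegrees

section LinearAction

variable {K n : Type*} [Field K] [Fintype n] [DecidableEq n]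

/-- The action of linear substitutions on polynomials, `(g • p) x = p (g⁻¹ x)`; the inverse makes
it a left action. -/
noncomputable instance linearSubstitutionAction :
    MulSemiringAction (GL n K) (MvPolynomial n K) where
  smul g := bind₁ ((g⁻¹ : GL n K) : Matrix n n K).toMvPolynomial
  one_smul p := by
    change bind₁ _ p = p
    rw [inv_one, Units.val_one, Matrix.toMvPolynomial_one, bind₁_X_left, AlgHom.id_apply]
  mul_smul g h p := by
    change bind₁ _ p = bind₁ _ (bind₁ _ p)
    rw [bind₁_bind₁, mul_inv_rev, Units.val_mul]
    exact congrArg (bind₁ · p) (_root_.funext (Matrix.toMvPolynomial_mul _ _))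
  smul_zero _ := map_zero _
  smul_add _ := map_add _
  smul_one _ := map_one _
  smul_mul _ := map_mul _

instance : SMulCommClass (GL n K) K (MvPolynomial n K) where
  smul_comm _ _ _ := map_smul _ _ _

theorem eval_linear_smul (g : GL n K) (p : MvPolynomial n K) (x : n → K) :
    eval x (g • p) = eval (((g⁻¹ : GL n K) : Matrix n n K).mulVec x) p := by
  calc eval x (bind₁ _ p)
      = eval (fun i => eval x (((g⁻¹ : GL n K) : Matrix n n K).toMvPolynomial i)) p :=
        eval₂Hom_bind₁ _ _ _ p
    _ = eval (((g⁻¹ : GL n K) : Matrix n n K).mulVec x) p := by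
        simp only [Matrix.toMvPolynomial_eval_eq_apply]

instance : FaithfulSMul (GL n K) (MvPolynomial n K) where
  eq_of_smul_eq_smul {g h} smul_eq := by
    refine inv_injective (Units.ext (Matrix.mulVec_injective (_root_.funext fun x => ?_)))
    refine _root_.funext fun i => ?_
    simpa only [eval_linear_smul, eval_X] using congrArg (eval x) (smul_eq (X i))

theorem totalDegree_linear_smul_le (g : GL n K) (p : MvPolynomial n K) :
    (g • p).totalDegree ≤ p.totalDegree := by
  refine totalDegree_aeval_le (d := 1) (Matrix.toMvPolynomial_totalDegree_le _) ?_
  rw [← restrictTotalDegree_eq_restrictSupport_weight_one, mem_restrictTotalDegree]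

theorem stmt_12_general (G : Subgroup (GL n K)) [Finite G] {φ : n → MvPolynomial n K} {d : n → ℕ}
    (independent : AlgebraicIndependent K φ) (homogeneous : ∀ i, (φ i).IsHomogeneous (d i))
    (mem : ∀ i, φ i ∈ FixedPoints.subalgebra K (MvPolynomial n K) G) :
    Nat.card G = ∏ i, d i ↔
      Algebra.adjoin K (Set.range φ) = FixedPoints.subalgebra K (MvPolynomial n K) G :=
  card_eq_prod_iff_adjoin_eq_fixedPoints (fun g => totalDegree_linear_smul_le (g : GL n K))
    independent homogeneous mem

end LinearAction

theorem isInvariantPoly_iff_mem_fixedPoints {G : Subgroup (GL (Fin 2) ℂ)}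
    {p : MvPolynomial (Fin 2) ℂ} :
    IsInvariantPoly G p ↔ p ∈ FixedPoints.subalgebra ℂ (MvPolynomial (Fin 2) ℂ) G := by
  constructor
  · refine fun invariant g => MvPolynomial.funext fun x => ?_
    exact (eval_linear_smul (g : GL (Fin 2) ℂ) p x).trans (invariant _ (G.inv_mem g.2) x)
  · intro fixed g hg x
    have smul_eq : g⁻¹ • p = p := fixed ⟨g⁻¹, G.inv_mem hg⟩
    rw [← inv_inv g, ← eval_linear_smul, smul_eq]

theorem card_eq_mul_iff_forall_isInvariantPoly_mem_adjoin (G : Subgroup (GL (Fin 2) ℂ)) [Finite G]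
    {φ₁ φ₂ : MvPolynomial (Fin 2) ℂ} {d₁ d₂ : ℕ} (invariant₁ : IsInvariantPoly G φ₁)
    (invariant₂ : IsInvariantPoly G φ₂) (homogeneous₁ : φ₁.IsHomogeneous d₁)
    (homogeneous₂ : φ₂.IsHomogeneous d₂) (independent : AlgebraicIndependent ℂ ![φ₁, φ₂]) :
    Nat.card G = d₁ * d₂ ↔
      ∀ p : MvPolynomial (Fin 2) ℂ, IsInvariantPoly G p → p ∈ Algebra.adjoin ℂ {φ₁, φ₂} := by
  simp only [isInvariantPoly_iff_mem_fixedPoints] at *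
  have mem : ∀ i, ![φ₁, φ₂] i ∈ FixedPoints.subalgebra ℂ (MvPolynomial (Fin 2) ℂ) G :=
    Fin.forall_fin_two.2 ⟨invariant₁, invariant₂⟩
  have homogeneous : ∀ i, (![φ₁, φ₂] i).IsHomogeneous (![d₁, d₂] i) :=
    Fin.forall_fin_two.2 ⟨homogeneous₁, homogeneous₂⟩
  have adjoin_le := Algebra.adjoin_le (Set.range_subset_iff.2 mem)
  have criterion := stmt_12_general G independent homogeneous mem
  rw [Fin.prod_univ_two, adjoin_le.ge_iff_eq.symm, Matrix.range_cons_cons_empty] at criterion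
  exact criterion

/-- Let `G ⊂ GL(2,ℂ)` be a finite complex reflection group (a
finite subgroup generated by its pseudo-reflections, elements `≠ 1` fixing a
hyperplane pointwise). Then there exist two algebraically independent
homogeneous invariants `φ₁, φ₂` with `|G| = deg φ₁ · deg φ₂` if and only if
there exist two algebraically independent homogeneous invariants `φ₁, φ₂` which
together with `1` generate `ℂ[x,y]^G` as a `ℂ`-algebra. -/
theorem stmt_12 (G : Subgroup (GL (Fin 2) ℂ)) [Finite G]
    (hrefl : Subgroup.closure
      {g : GL (Fin 2) ℂ | g ∈ G ∧ g ≠ 1 ∧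
        ∃ v : Fin 2 → ℂ, v ≠ 0 ∧ Matrix.mulVec (g : Matrix (Fin 2) (Fin 2) ℂ) v = v}
      = G) :
    (∃ (φ₁ φ₂ : MvPolynomial (Fin 2) ℂ) (d₁ d₂ : ℕ),
        IsInvariantPoly G φ₁ ∧ IsInvariantPoly G φ₂ ∧
        φ₁.IsHomogeneous d₁ ∧ φ₂.IsHomogeneous d₂ ∧
        AlgebraicIndependent ℂ ![φ₁, φ₂] ∧
        Nat.card G = d₁ * d₂) ↔
    (∃ (φ₁ φ₂ : MvPolynomial (Fin 2) ℂ) (d₁ d₂ : ℕ),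
        IsInvariantPoly G φ₁ ∧ IsInvariantPoly G φ₂ ∧
        φ₁.IsHomogeneous d₁ ∧ φ₂.IsHomogeneous d₂ ∧
        AlgebraicIndependent ℂ ![φ₁, φ₂] ∧
        ∀ p : MvPolynomial (Fin 2) ℂ, IsInvariantPoly G p →
          p ∈ Algebra.adjoin ℂ {φ₁, φ₂}) :=
  exists₄_congr fun _ _ _ _ => and_congr_right fun invariant₁ => and_congr_right fun invariant₂ =>
    and_congr_right fun homogeneous₁ => and_congr_right fun homogeneous₂ =>
      and_congr_right fun independent => card_eq_mul_iff_forall_isInvariantPoly_mem_adjoin G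
        invariant₁ invariant₂ homogeneous₁ homogeneous₂ independent
end

section
/- For n ≥ 2 and d ≥ 3: if ∏_{i=1}^{n−1}(aᵢ−1) ≠ ∏_{i=1}^{n−1}(bᵢ−1) (with all aᵢ, bᵢ ≥ 2), then the proper maps f_{d,a}(x) = (x₁,…,x_{n−1}, xₙ^d − d(∑ xᵢ^{aᵢ})xₙ) and f_{d,b} are not equivalent, i.e., there are no polynomial automorphisms Φ₁, Φ₂ of ℂⁿ with f_{d,b} = Φ₂ ∘ f_{d,a} ∘ Φ₁. Consequently, for each d ≥ 3 there are infinitely many equivalence classes of proper polynomial self-maps of ℂⁿ of topological degree d. -/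
open MvPolynomial

variable (N : ℕ)

/-- `f : ℂᴺ → ℂᴺ` is a polynomial map. -/
def IsPolyMapN (f : (Fin N → ℂ) → (Fin N → ℂ)) : Prop :=
  ∃ P : Fin N → MvPolynomial (Fin N) ℂ, ∀ x i, f x i = eval x (P i)

/-- A polynomial automorphism of `ℂᴺ`. -/
def IsPolyAutN (Φ : (Fin N → ℂ) ≃ (Fin N → ℂ)) : Prop :=
  IsPolyMapN N Φ ∧ IsPolyMapN N Φ.symm

/-- Equivalence of maps: `f₂ = Φ₂ ∘ f₁ ∘ Φ₁` with `Φ₁, Φ₂ ∈ Aut(ℂᴺ)`. -/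
def EquivMaps (f₁ f₂ : (Fin N → ℂ) → (Fin N → ℂ)) : Prop :=
  ∃ Φ₁ Φ₂ : (Fin N → ℂ) ≃ (Fin N → ℂ), IsPolyAutN N Φ₁ ∧ IsPolyAutN N Φ₂ ∧
    ∀ x, f₂ x = Φ₂ (f₁ (Φ₁ x))

/-- Properness: preimages of compact sets are compact. -/
def IsProperN (f : (Fin N → ℂ) → (Fin N → ℂ)) : Prop :=
  ∀ K : Set (Fin N → ℂ), IsCompact K → IsCompact (f ⁻¹' K)

/-- Topological degree `d`: every point off some algebraic hypersurface has
exactly `d` preimages. -/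
def HasTopDegreeN (f : (Fin N → ℂ) → (Fin N → ℂ)) (d : ℕ) : Prop :=
  ∃ P : MvPolynomial (Fin N) ℂ, P ≠ 0 ∧
    ∀ y : Fin N → ℂ, eval y P ≠ 0 → (f ⁻¹' {y}).ncard = d

/-- The map `f_{d,a}(x₁,…,xₙ) = (x₁,…,x_{n−1}, xₙ^d − d(∑ xᵢ^{aᵢ})xₙ)`
(with `n = m + 1`). -/
noncomputable def fda (m d : ℕ) (a : Fin m → ℕ) (x : Fin (m + 1) → ℂ) :
    Fin (m + 1) → ℂ := fun i =>
  if i = Fin.last m then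
    x (Fin.last m) ^ d
      - (d : ℂ) * (∑ j : Fin m, x (Fin.castSucc j) ^ a j) * x (Fin.last m)
  else x i

/-! The critical locus of `f_{d,a}` is the Brieskorn–Pham hypersurface
`xₙ^(d-1) = ∑ xᵢ^aᵢ`, whose Milnor number is `(d - 2) ∏ (aᵢ - 1)`. Composing a polynomial map with
automorphisms changes its Jacobian determinant only by a polynomial automorphism and a nonzero
constant factor, so the dimension of `ℂ[x] / (∂J/∂x₁, …, ∂J/∂xₙ)`, where `J` is the Jacobian
determinant, is an invariant of the equivalence class. -/

section JacobianMatrix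

variable {ρ σ τ R : Type*} [CommRing R]

theorem pderiv_algHom_apply [Fintype σ] (φ : MvPolynomial σ R →ₐ[R] MvPolynomial τ R)
    (p : MvPolynomial σ R) (i : τ) :
    pderiv i (φ p) = ∑ j, φ (pderiv j p) * pderiv i (φ (X j)) := by
  classical
  induction p using MvPolynomial.induction_on with
  | C r => simp [← algebraMap_eq]
  | add p q hp hq => simp only [map_add, hp, hq, add_mul, Finset.sum_add_distrib]
  | mul_X p k hp =>
    have hX : ∑ j, φ (p * pderiv j (X k)) * pderiv i (φ (X j)) = φ p * pderiv i (φ (X k)) := by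
      rw [Finset.sum_eq_single k] <;> simp +contextual [pderiv_X, eq_comm]
    have hsum : ∑ j, φ (pderiv j p * X k) * pderiv i (φ (X j)) = pderiv i (φ p) * φ (X k) := by
      simp only [hp, Finset.sum_mul, map_mul, mul_right_comm]
    rw [map_mul, pderiv_mul, ← hsum, ← hX, ← Finset.sum_add_distrib]
    simp only [pderiv_mul, map_add, add_mul]

/-- The Jacobian matrix of the polynomial map with comorphism `φ`; its rows are indexed by the
coordinates of the target. -/
noncomputable def jacobianMatrix (φ : MvPolynomial σ R →ₐ[R] MvPolynomial τ R) :
    Matrix σ τ (MvPolynomial τ R) :=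
  Matrix.of fun i j => pderiv j (φ (X i))

theorem jacobianMatrix_id [DecidableEq σ] :
    jacobianMatrix (AlgHom.id R (MvPolynomial σ R)) = 1 := by
  ext1 i j
  simp [jacobianMatrix, pderiv_X, Matrix.one_apply, Pi.single_apply]

theorem jacobianMatrix_comp [Fintype σ] (φ : MvPolynomial σ R →ₐ[R] MvPolynomial τ R)
    (ψ : MvPolynomial ρ R →ₐ[R] MvPolynomial σ R) :
    jacobianMatrix (φ.comp ψ) = (jacobianMatrix ψ).map φ * jacobianMatrix φ := by
  ext1 i j
  exact pderiv_algHom_apply φ (ψ (X i)) j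

variable [Fintype σ] [DecidableEq σ]

/-- The Jacobian determinant of the polynomial self-map with comorphism `φ`. -/
noncomputable def jacobianDet (φ : MvPolynomial σ R →ₐ[R] MvPolynomial σ R) : MvPolynomial σ R :=
  (jacobianMatrix φ).det

theorem jacobianDet_comp (φ ψ : MvPolynomial σ R →ₐ[R] MvPolynomial σ R) :
    jacobianDet (φ.comp ψ) = φ (jacobianDet ψ) * jacobianDet φ := by
  rw [jacobianDet, jacobianMatrix_comp, Matrix.det_mul, jacobianDet, AlgHom.map_det]
  rfl

theorem isUnit_jacobianDet_algEquiv (e : MvPolynomial σ R ≃ₐ[R] MvPolynomial σ R) :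
    IsUnit (jacobianDet e.toAlgHom) := by
  have hmul := jacobianDet_comp e.toAlgHom e.symm.toAlgHom
  rw [AlgEquiv.comp_symm, jacobianDet, jacobianMatrix_id, Matrix.det_one] at hmul
  exact IsUnit.of_mul_eq_one_right _ hmul.symm

theorem jacobianDet_of_forall_ne {φ : MvPolynomial σ R →ₐ[R] MvPolynomial σ R} (k : σ)
    (hφ : ∀ i ≠ k, φ (X i) = X i) : jacobianDet φ = pderiv k (φ (X k)) := by
  have hrow : jacobianMatrix φ = Matrix.updateRow 1 k (jacobianMatrix φ k) := by
    ext1 i j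
    rcases eq_or_ne i k with rfl | hi
    · rw [Matrix.updateRow_self]
    · simp [jacobianMatrix, hφ i hi, hi, pderiv_X, Matrix.one_apply, Pi.single_apply]
  rw [jacobianDet, hrow, ← Matrix.cramer_transpose_apply, Matrix.transpose_one, Matrix.cramer_one]
  rfl

end JacobianMatrix

section MilnorNumber

variable {σ τ R : Type*} [CommRing R]

/-- The Jacobian ideal of a polynomial, generated by its partial derivatives. -/
noncomputable def jacobianIdeal (p : MvPolynomial σ R) : Ideal (MvPolynomial σ R) :=
  Ideal.span (Set.range fun i => pderiv i p)

theorem span_range_mul_eq_of_isUnit {ι A : Type*} [CommRing A] {u : ι → A}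
    (hu : ∀ i, IsUnit (u i)) (f : ι → A) :
    Ideal.span (Set.range fun i => u i * f i) = Ideal.span (Set.range f) := by
  refine le_antisymm (Ideal.span_le.mpr ?_) (Ideal.span_le.mpr ?_) <;> rintro _ ⟨i, rfl⟩
  · exact Ideal.mul_mem_left _ _ (Ideal.subset_span ⟨i, rfl⟩)
  · exact (Ideal.unit_mul_mem_iff_mem _ (hu i)).mp (Ideal.subset_span ⟨i, rfl⟩)

theorem jacobianIdeal_mul_of_isUnit [IsReduced R] {u : MvPolynomial σ R} (hu : IsUnit u)
    (p : MvPolynomial σ R) : jacobianIdeal (u * p) = jacobianIdeal p := by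
  obtain ⟨r, -, rfl⟩ := isUnit_iff_eq_C_of_isReduced.mp hu
  simp only [jacobianIdeal, pderiv_C_mul]
  exact span_range_mul_eq_of_isUnit (fun _ => hu) _

theorem jacobianIdeal_algHom_apply_le [Finite σ] (φ : MvPolynomial σ R →ₐ[R] MvPolynomial τ R)
    (p : MvPolynomial σ R) : jacobianIdeal (φ p) ≤ (jacobianIdeal p).map φ := by
  cases nonempty_fintype σ
  rw [jacobianIdeal, Ideal.span_le]
  rintro _ ⟨i, rfl⟩
  change pderiv i (φ p) ∈ _
  rw [pderiv_algHom_apply φ]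
  exact Ideal.sum_mem _ fun j _ => Ideal.mul_mem_right _ _
    (Ideal.mem_map_of_mem _ (Ideal.subset_span ⟨j, rfl⟩))

theorem jacobianIdeal_algEquiv_apply [Finite σ] [Finite τ]
    (e : MvPolynomial σ R ≃ₐ[R] MvPolynomial τ R) (p : MvPolynomial σ R) :
    jacobianIdeal (e p) = (jacobianIdeal p).map (e : MvPolynomial σ R →+* MvPolynomial τ R) := by
  refine le_antisymm (jacobianIdeal_algHom_apply_le e.toAlgHom p) (Ideal.map_le_iff_le_comap.mpr ?_)
  have hsymm := jacobianIdeal_algHom_apply_le e.symm.toAlgHom (e p)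
  rw [AlgEquiv.coe_toAlgHom, e.symm_apply_apply] at hsymm
  refine hsymm.trans (Ideal.map_le_iff_le_comap.mpr fun q hq => ?_)
  simpa [Ideal.mem_comap] using hq

/-- The global Milnor number of a polynomial: the rank of its Milnor algebra. It is `0` when the
Milnor algebra has infinite rank. -/
noncomputable def milnorNumber (p : MvPolynomial σ R) : ℕ :=
  Module.finrank R (MvPolynomial σ R ⧸ jacobianIdeal p)

theorem milnorNumber_mul_of_isUnit [IsReduced R] {u : MvPolynomial σ R} (hu : IsUnit u)
    (p : MvPolynomial σ R) : milnorNumber (u * p) = milnorNumber p := by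
  rw [milnorNumber, jacobianIdeal_mul_of_isUnit hu, milnorNumber]

theorem milnorNumber_algEquiv_apply [Finite σ] [Finite τ]
    (e : MvPolynomial σ R ≃ₐ[R] MvPolynomial τ R) (p : MvPolynomial σ R) :
    milnorNumber (e p) = milnorNumber p :=
  (Ideal.quotientEquivAlg (jacobianIdeal p) (jacobianIdeal (e p)) e
    (jacobianIdeal_algEquiv_apply e p)).toLinearEquiv.finrank_eq.symm

theorem milnorNumber_jacobianDet_comp_algEquiv [IsReduced R] [Fintype σ] [DecidableEq σ]
    (e₁ e₂ : MvPolynomial σ R ≃ₐ[R] MvPolynomial σ R)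
    (φ : MvPolynomial σ R →ₐ[R] MvPolynomial σ R) :
    milnorNumber (jacobianDet (e₁.toAlgHom.comp (φ.comp e₂.toAlgHom))) =
      milnorNumber (jacobianDet φ) := by
  have hdet : jacobianDet (e₁.toAlgHom.comp (φ.comp e₂.toAlgHom)) =
      (e₁ (φ (jacobianDet e₂.toAlgHom)) * jacobianDet e₁.toAlgHom) * e₁ (jacobianDet φ) := by
    simp only [jacobianDet_comp, map_mul, AlgEquiv.coe_toAlgHom]
    ring
  have hunit : IsUnit (e₁ (φ (jacobianDet e₂.toAlgHom)) * jacobianDet e₁.toAlgHom) :=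
    (((isUnit_jacobianDet_algEquiv e₂).map φ).map e₁).mul (isUnit_jacobianDet_algEquiv e₁)
  rw [hdet, milnorNumber_mul_of_isUnit hunit, milnorNumber_algEquiv_apply]

end MilnorNumber

section BrieskornPham

variable {σ R : Type*} [CommRing R]

theorem finrank_quotient_span_monomial [Nontrivial R] (s : Set (σ →₀ ℕ)) :
    Module.finrank R (MvPolynomial σ R ⧸ Ideal.span ((fun u => monomial u (1 : R)) '' s)) =
      Nat.card {v : σ →₀ ℕ // ∀ u ∈ s, ¬ u ≤ v} := by
  let standardCoeffs : MvPolynomial σ R →ₗ[R] {v : σ →₀ ℕ // ∀ u ∈ s, ¬ u ≤ v} →₀ R :=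
    Finsupp.lsubtypeDomain {v | ∀ u ∈ s, ¬ u ≤ v} ∘ₗ (basisMonomials σ R).repr.toLinearMap
  have hcoeff (p v) : standardCoeffs p v = coeff v p := rfl
  have hker : LinearMap.ker standardCoeffs =
      (Ideal.span ((fun u => monomial u (1 : R)) '' s)).restrictScalars R := by
    ext p
    rw [LinearMap.mem_ker, Submodule.restrictScalars_mem, mem_ideal_span_monomial_image]
    simp only [DFunLike.ext_iff, hcoeff, Finsupp.coe_zero, Pi.zero_apply, Subtype.forall,
      mem_support_iff]
    exact forall_congr' fun v => by rw [← not_imp_not]; push Not; rfl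
  have hsurj : Function.Surjective standardCoeffs := fun f => by
    classical
    refine ⟨(basisMonomials σ R).repr.symm f.extendDomain, ?_⟩
    rw [LinearMap.comp_apply, LinearEquiv.coe_coe, LinearEquiv.apply_symm_apply]
    exact Finsupp.subtypeDomain_extendDomain f
  rw [← ((Submodule.quotEquivOfEq _ _ hker).trans (Submodule.Quotient.restrictScalarsEquiv R
    (Ideal.span ((fun u => monomial u (1 : R)) '' s)))).finrank_eq,
    (standardCoeffs.quotKerEquivOfSurjective hsurj).finrank_eq,
    Module.finrank_eq_nat_card_basis Finsupp.basisSingleOne]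

theorem card_finsupp_forall_lt [Fintype σ] (e : σ → ℕ) :
    Nat.card {v : σ →₀ ℕ // ∀ i, v i < e i} = ∏ i, e i := by
  let equivPi : {v : σ →₀ ℕ // ∀ i, v i < e i} ≃ ∀ i, Fin (e i) :=
    ((Finsupp.equivFunOnFinite.subtypeEquiv fun _ => Iff.rfl).trans
      (Equiv.subtypePiEquivPi (p := fun {i} k => k < e i))).trans
      (Equiv.piCongrRight fun _ => Fin.equivSubtype.symm)
  rw [Nat.card_congr equivPi, Nat.card_pi]
  simp only [Nat.card_fin]

theorem finrank_quotient_span_X_pow [Nontrivial R] [Fintype σ] (e : σ → ℕ) :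
    Module.finrank R (MvPolynomial σ R ⧸
      Ideal.span (Set.range fun i => (X i : MvPolynomial σ R) ^ e i)) = ∏ i, e i := by
  have hrange : (Set.range fun i => (X i : MvPolynomial σ R) ^ e i) =
      (fun u => monomial u 1) '' Set.range fun i => Finsupp.single i (e i) := by
    simp only [X_pow_eq_monomial, ← Set.range_comp, Function.comp_def]
  rw [hrange, finrank_quotient_span_monomial, ← card_finsupp_forall_lt]
  simp [Finsupp.single_le_iff]

/-- The Brieskorn–Pham polynomial `∑ cᵢ xᵢ^nᵢ`. -/
noncomputable def brieskornPham [Fintype σ] (c : σ → R) (n : σ → ℕ) : MvPolynomial σ R :=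
  ∑ i, C (c i) * X i ^ n i

theorem pderiv_brieskornPham [Fintype σ] (c : σ → R) (n : σ → ℕ) (i : σ) :
    pderiv i (brieskornPham c n) = C (c i * n i) * X i ^ (n i - 1) := by
  classical
  rw [brieskornPham, map_sum, Finset.sum_eq_single i]
  · simp [mul_assoc]
  · intro j _ hj
    simp [pderiv_X, hj]
  · simp

theorem milnorNumber_brieskornPham [Nontrivial R] [Fintype σ] {c : σ → R} {n : σ → ℕ}
    (hcn : ∀ i, IsUnit (c i * n i)) : milnorNumber (brieskornPham c n) = ∏ i, (n i - 1) := by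
  have hideal : jacobianIdeal (brieskornPham c n) =
      Ideal.span (Set.range fun i => X i ^ (n i - 1)) := by
    simp only [jacobianIdeal, pderiv_brieskornPham]
    exact span_range_mul_eq_of_isUnit (fun i => (hcn i).map C) _
  rw [milnorNumber, hideal, finrank_quotient_span_X_pow]

end BrieskornPham

section Comorphism

theorem comap_injective {σ τ R : Type*} [CommRing R] [IsDomain R] [Infinite R] :
    Function.Injective (comap : (MvPolynomial σ R →ₐ[R] MvPolynomial τ R) → _) :=
  fun φ ψ h => algHom_ext fun i => MvPolynomial.funext fun x => by
    simpa [aeval_eq_eval] using congrFun (congrFun h x) i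

variable {n : ℕ}

theorem isPolyMapN_iff_exists_comap {f : (Fin n → ℂ) → (Fin n → ℂ)} :
    IsPolyMapN n f ↔
      ∃ φ : MvPolynomial (Fin n) ℂ →ₐ[ℂ] MvPolynomial (Fin n) ℂ, comap φ = f := by
  constructor
  · rintro ⟨P, hP⟩
    exact ⟨bind₁ P, funext₂ fun x i => by simp [hP, aeval_eq_eval]⟩
  · rintro ⟨φ, rfl⟩
    exact ⟨fun i => φ (X i), fun x i => by simp [aeval_eq_eval]⟩

theorem IsPolyAutN.exists_comap_algEquiv {Φ : (Fin n → ℂ) ≃ (Fin n → ℂ)} (hΦ : IsPolyAutN n Φ) :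
    ∃ e : MvPolynomial (Fin n) ℂ ≃ₐ[ℂ] MvPolynomial (Fin n) ℂ,
      comap e.toAlgHom = Φ := by
  obtain ⟨φ, hφ⟩ := isPolyMapN_iff_exists_comap.mp hΦ.1
  obtain ⟨ψ, hψ⟩ := isPolyMapN_iff_exists_comap.mp hΦ.2
  refine ⟨AlgEquiv.ofAlgHom φ ψ (comap_injective ?_) (comap_injective ?_), hφ⟩
  · rw [comap_comp, hφ, hψ, comap_id, Equiv.symm_comp_self]
  · rw [comap_comp, hφ, hψ, comap_id, Equiv.self_comp_symm]

theorem EquivMaps.milnorNumber_jacobianDet_eq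
    {φ ψ : MvPolynomial (Fin n) ℂ →ₐ[ℂ] MvPolynomial (Fin n) ℂ}
    (h : EquivMaps n (comap φ) (comap ψ)) :
    milnorNumber (jacobianDet φ) = milnorNumber (jacobianDet ψ) := by
  obtain ⟨Φ₁, Φ₂, hΦ₁, hΦ₂, hcomp⟩ := h
  obtain ⟨e₁, he₁⟩ := hΦ₁.exists_comap_algEquiv
  obtain ⟨e₂, he₂⟩ := hΦ₂.exists_comap_algEquiv
  have hψ : ψ = e₁.toAlgHom.comp (φ.comp e₂.toAlgHom) := by
    apply comap_injective
    rw [comap_comp, comap_comp, he₁, he₂]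
    exact funext hcomp
  rw [hψ, milnorNumber_jacobianDet_comp_algEquiv]

end Comorphism

section Trinomial

theorem norm_le_max_of_pow_eq_add_mul {K : Type*} [NormedDivisionRing K] {n : ℕ} (hn : 2 ≤ n)
    {t c s : K} (ht : t ^ n = c + s * t) : ‖t‖ ≤ max 1 (‖c‖ + ‖s‖) := by
  by_contra! hlt
  obtain ⟨hone, hsum⟩ := max_lt_iff.mp hlt
  refine lt_irrefl (‖t‖ ^ 2) ?_
  calc
    ‖t‖ ^ 2 ≤ ‖t‖ ^ n := pow_le_pow_right₀ hone.le hn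
    _ = ‖c + s * t‖ := by rw [← norm_pow, ht]
    _ ≤ ‖c‖ + ‖s‖ * ‖t‖ := by simpa using norm_add_le c (s * t)
    _ ≤ ‖c‖ * ‖t‖ + ‖s‖ * ‖t‖ := by
      gcongr
      exact le_mul_of_one_le_right (norm_nonneg c) hone.le
    _ = (‖c‖ + ‖s‖) * ‖t‖ := (add_mul _ _ _).symm
    _ < ‖t‖ * ‖t‖ := by gcongr
    _ = ‖t‖ ^ 2 := (sq _).symm

-- The hypothesis `h` says that the discriminant, divided by its factor `± n ^ n`, is nonzero.
theorem separable_X_pow_sub_C_mul_X_sub_C {K : Type*} [Field K] {n : ℕ} (hn : (n : K) ≠ 0)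
    {s c : K} (h : (1 - n : K) ^ (n - 1) * s ^ n ≠ c ^ (n - 1)) :
    (.X ^ n - .C (n * s) * .X - .C c : Polynomial K).Separable := by
  have hn1 : n - 1 + 1 = n := Nat.sub_add_cancel (Nat.pos_of_ne_zero (by rintro rfl; simp at hn))
  refine (Polynomial.isCoprime_iff_aeval_ne_zero_of_isAlgClosed K (AlgebraicClosure K) _ _).mpr
    fun t => not_and_or.mp fun ⟨hroot, hcrit⟩ => h ?_
  have hn' : (n : AlgebraicClosure K) ≠ 0 := by
    simpa using (algebraMap K (AlgebraicClosure K)).injective.ne hn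
  rw [Polynomial.derivative_sub, Polynomial.derivative_sub, Polynomial.derivative_X_pow,
    Polynomial.derivative_C_mul_X, Polynomial.derivative_C, sub_zero] at hcrit
  simp only [map_sub, map_mul, map_pow, Polynomial.aeval_X, Polynomial.aeval_C, map_natCast]
    at hroot hcrit
  have hs : t ^ (n - 1) = algebraMap K _ s := mul_left_cancel₀ hn' (by linear_combination hcrit)
  have hpow : t ^ n = algebraMap K _ s * t := by rw [← hs, ← pow_succ, hn1]
  have hc : algebraMap K _ c = (1 - n) * (algebraMap K _ s * t) := by
    linear_combination hpow - hroot
  apply (algebraMap K (AlgebraicClosure K)).injective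
  simp only [map_mul, map_pow, map_sub, map_one, map_natCast]
  rw [hc, mul_pow, mul_pow, hs, ← pow_succ, hn1]

theorem ncard_setOf_pow_sub_mul_eq {K : Type*} [Field K] [IsAlgClosed K] {n : ℕ} (hn : 2 ≤ n)
    (hn0 : (n : K) ≠ 0) {s c : K} (h : (1 - n : K) ^ (n - 1) * s ^ n ≠ c ^ (n - 1)) :
    {t : K | t ^ n - n * s * t = c}.ncard = n := by
  set p : Polynomial K := .X ^ n - .C (n * s) * .X - .C c with hp
  have hdeg : p.natDegree = n := by
    rw [hp, Polynomial.natDegree_sub_C, Polynomial.natDegree_sub_eq_left_of_natDegree_lt,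
      Polynomial.natDegree_X_pow]
    rw [Polynomial.natDegree_X_pow]
    exact ((Polynomial.natDegree_C_mul_le _ _).trans Polynomial.natDegree_X_le).trans_lt hn
  have hp0 : p ≠ 0 := Polynomial.ne_zero_of_natDegree_gt (n := 0) (by omega)
  have hroots : {t : K | t ^ n - n * s * t = c} = p.rootSet K := by
    ext t
    rw [Polynomial.mem_rootSet_of_ne hp0, hp]
    simp [sub_eq_zero]
  rw [hroots, ← Nat.card_coe_set_eq, Nat.card_eq_fintype_card,
    Polynomial.card_rootSet_eq_natDegree (separable_X_pow_sub_C_mul_X_sub_C hn0 h)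
      (IsAlgClosed.splits _), hdeg]

end Trinomial

theorem isProperN_of_norm_le {n : ℕ} {f : (Fin n → ℂ) → (Fin n → ℂ)} (hf : Continuous f)
    {B : (Fin n → ℂ) → ℝ} (hB : Continuous B) (hle : ∀ x, ‖x‖ ≤ B (f x)) : IsProperN n f := by
  intro K hK
  obtain ⟨r, hr⟩ := (hK.image hB).bddAbove
  refine Metric.isCompact_of_isClosed_isBounded (hK.isClosed.preimage hf)
    (isBounded_iff_forall_norm_le.mpr ⟨r, fun x hx => (hle x).trans ?_⟩)
  exact hr (Set.mem_image_of_mem B hx)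

section Family

variable {m d : ℕ} {a b : Fin m → ℕ}

@[simp]
theorem fda_castSucc (x : Fin (m + 1) → ℂ) (j : Fin m) : fda m d a x j.castSucc = x j.castSucc := by
  simp [fda, Fin.castSucc_ne_last]

@[simp]
theorem fda_last (x : Fin (m + 1) → ℂ) :
    fda m d a x (Fin.last m) =
      x (Fin.last m) ^ d - d * (∑ j : Fin m, x j.castSucc ^ a j) * x (Fin.last m) := by
  simp [fda]

/-- The comorphism of `fda m d a`. -/
noncomputable def fdaComorphism (m d : ℕ) (a : Fin m → ℕ) :
    MvPolynomial (Fin (m + 1)) ℂ →ₐ[ℂ] MvPolynomial (Fin (m + 1)) ℂ :=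
  bind₁ (Fin.snoc (α := fun _ => MvPolynomial (Fin (m + 1)) ℂ) (fun j => X j.castSucc)
    (X (Fin.last m) ^ d - C (d : ℂ) * (∑ j : Fin m, X j.castSucc ^ a j) * X (Fin.last m)))

theorem comap_fdaComorphism (m d : ℕ) (a : Fin m → ℕ) :
    comap (fdaComorphism m d a) = fda m d a := by
  ext x i
  refine Fin.lastCases ?_ (fun j => ?_) i <;> simp [fdaComorphism, aeval_eq_eval]

theorem jacobianDet_fdaComorphism (m d : ℕ) (a : Fin m → ℕ) :
    jacobianDet (fdaComorphism m d a) =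
      brieskornPham (Fin.snoc (α := fun _ => ℂ) (fun _ => -(d : ℂ)) d)
        (Fin.snoc (α := fun _ => ℕ) a (d - 1)) := by
  have hfix (i : Fin (m + 1)) (hi : i ≠ Fin.last m) : fdaComorphism m d a (X i) = X i := by
    obtain ⟨j, rfl⟩ := Fin.exists_castSucc_eq.mpr hi
    simp [fdaComorphism]
  calc
    jacobianDet (fdaComorphism m d a) =
        pderiv (Fin.last m) (fdaComorphism m d a (X (Fin.last m))) :=
      jacobianDet_of_forall_ne _ hfix
    _ = C (d : ℂ) * X (Fin.last m) ^ (d - 1) - C (d : ℂ) * ∑ j : Fin m, X j.castSucc ^ a j := by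
      simp [fdaComorphism, pderiv_X, Fin.castSucc_ne_last]
    _ = _ := by simp [brieskornPham, Fin.sum_univ_castSucc, Finset.mul_sum, sub_eq_neg_add]

theorem milnorNumber_jacobianDet_fdaComorphism (hd : 2 ≤ d) (ha : ∀ i, a i ≠ 0) :
    milnorNumber (jacobianDet (fdaComorphism m d a)) = (∏ i, (a i - 1)) * (d - 2) := by
  have hd0 : d ≠ 0 := by omega
  have hd1 : d - 1 ≠ 0 := by omega
  rw [jacobianDet_fdaComorphism, milnorNumber_brieskornPham]
  · simp [Fin.prod_univ_castSucc, Nat.sub_sub]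
  · intro i
    rw [isUnit_iff_ne_zero]
    refine Fin.lastCases ?_ (fun j => ?_) i
    · simp only [Fin.snoc_last]
      exact_mod_cast mul_ne_zero hd0 hd1
    · simp [hd0, ha j]

theorem not_equivMaps_fda (hd : 3 ≤ d) (ha : ∀ i, a i ≠ 0) (hb : ∀ i, b i ≠ 0)
    (hne : ∏ i, (a i - 1) ≠ ∏ i, (b i - 1)) :
    ¬ EquivMaps (m + 1) (fda m d a) (fda m d b) := by
  rw [← comap_fdaComorphism, ← comap_fdaComorphism]
  intro h
  have hmilnor := h.milnorNumber_jacobianDet_eq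
  rw [milnorNumber_jacobianDet_fdaComorphism (by omega) ha,
    milnorNumber_jacobianDet_fdaComorphism (by omega) hb] at hmilnor
  exact hne (Nat.eq_of_mul_eq_mul_right (by omega) hmilnor)

theorem isPolyMapN_fda (m d : ℕ) (a : Fin m → ℕ) : IsPolyMapN (m + 1) (fda m d a) :=
  isPolyMapN_iff_exists_comap.mpr ⟨_, comap_fdaComorphism m d a⟩

theorem norm_le_of_fda (hd : 2 ≤ d) (a : Fin m → ℕ) (x : Fin (m + 1) → ℂ) :
    ‖x‖ ≤ max ‖fda m d a x‖ (max 1 (‖fda m d a x (Fin.last m)‖ +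
      ‖(d : ℂ) * ∑ j : Fin m, fda m d a x j.castSucc ^ a j‖)) := by
  refine (pi_norm_le_iff_of_nonneg (le_max_of_le_left (norm_nonneg _))).mpr fun i => ?_
  refine Fin.lastCases (le_max_of_le_right ?_) (fun j => le_max_of_le_left ?_) i
  · exact norm_le_max_of_pow_eq_add_mul hd (by simp)
  · simpa using norm_le_pi_norm (fda m d a x) j.castSucc

theorem isProperN_fda (hd : 2 ≤ d) (a : Fin m → ℕ) : IsProperN (m + 1) (fda m d a) := by
  refine isProperN_of_norm_le ?_ (B := fun y => max ‖y‖ (max 1 (‖y (Fin.last m)‖ +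
    ‖(d : ℂ) * ∑ j : Fin m, y j.castSucc ^ a j‖))) (by fun_prop) (norm_le_of_fda hd a)
  obtain ⟨P, hP⟩ := isPolyMapN_fda m d a
  exact continuous_pi fun i => by simpa only [hP] using continuous_eval (P i)

theorem preimage_fda_singleton (m d : ℕ) (a : Fin m → ℕ) (y : Fin (m + 1) → ℂ) :
    fda m d a ⁻¹' {y} = Function.update y (Fin.last m) ''
      {t | t ^ d - d * (∑ j : Fin m, y j.castSucc ^ a j) * t = y (Fin.last m)} := by
  ext x
  constructor
  · rintro rfl
    refine ⟨x (Fin.last m), by simp, funext fun i => ?_⟩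
    refine Fin.lastCases ?_ (fun j => ?_) i <;> simp [Fin.castSucc_ne_last]
  · rintro ⟨t, ht, rfl⟩
    refine funext fun i => ?_
    refine Fin.lastCases ?_ (fun j => ?_) i
    · simpa [Fin.castSucc_ne_last] using ht
    · simp [Fin.castSucc_ne_last]

theorem hasTopDegreeN_fda (hd : 2 ≤ d) (a : Fin m → ℕ) :
    HasTopDegreeN (m + 1) (fda m d a) d := by
  refine ⟨C ((1 - d : ℂ) ^ (d - 1)) * (∑ j : Fin m, X j.castSucc ^ a j) ^ d -
    X (Fin.last m) ^ (d - 1), fun hzero => ?_, fun y hy => ?_⟩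
  · have heval (t : ℂ) : (1 - d : ℂ) ^ (d - 1) * (∑ j, 0 ^ a j) ^ d = t ^ (d - 1) := by
      simpa [Fin.castSucc_ne_last, sub_eq_zero] using
        congrArg (eval (Pi.single (Fin.last m) t)) hzero
    have h01 := (heval 0).symm.trans (heval 1)
    rw [zero_pow (by omega), one_pow] at h01
    exact zero_ne_one h01
  · simp only [map_sub, map_mul, map_pow, map_sum, eval_C, eval_X] at hy
    rw [preimage_fda_singleton, Set.ncard_image_of_injective _ (Function.update_injective y _),
      ncard_setOf_pow_sub_mul_eq hd (Nat.cast_ne_zero.mpr (by omega)) (sub_ne_zero.mp hy)]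

end Family

/-- For `n = m+1 ≥ 2` and `d ≥ 3`: if `∏(aᵢ−1) ≠ ∏(bᵢ−1)` (all
`aᵢ, bᵢ ≥ 2`), then `f_{d,a}` and `f_{d,b}` are not equivalent. Consequently,
for each `d ≥ 3` there are infinitely many equivalence classes of proper
polynomial self-maps of `ℂⁿ` of topological degree `d`. -/
theorem stmt_18 (m : ℕ) (hm : 1 ≤ m) (d : ℕ) (hd : 3 ≤ d)
    (a b : Fin m → ℕ) (ha : ∀ i, 2 ≤ a i) (hb : ∀ i, 2 ≤ b i)
    (hne : ∏ i, (a i - 1) ≠ ∏ i, (b i - 1)) :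
    ¬ EquivMaps (m + 1) (fda m d a) (fda m d b) ∧
    ∃ F : ℕ → ((Fin (m + 1) → ℂ) → (Fin (m + 1) → ℂ)),
      (∀ k, IsPolyMapN (m + 1) (F k) ∧ IsProperN (m + 1) (F k) ∧
        HasTopDegreeN (m + 1) (F k) d) ∧
      ∀ k l, k ≠ l → ¬ EquivMaps (m + 1) (F k) (F l) := by
  refine ⟨not_equivMaps_fda hd (fun i => Nat.ne_zero_of_lt (ha i))
      (fun i => Nat.ne_zero_of_lt (hb i)) hne, fun k => fda m d fun _ => k + 2,
    fun k => ⟨isPolyMapN_fda _ _ _, isProperN_fda (by omega) _, hasTopDegreeN_fda (by omega) _⟩,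
    fun k l hkl => not_equivMaps_fda hd (by simp) (by simp) ?_⟩
  have hpow : (k + 1) ^ m ≠ (l + 1) ^ m :=
    (Nat.pow_left_injective (by omega : m ≠ 0)).ne (by omega)
  simpa using hpow
end
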